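/- arXiv:1301.6772 — 3 statements merged into one kernel-verified Lean document; each statement's English description precedes it below -/
import Mathlib

section
/- For every prime p and every integer N ≥ 0, the partial sum Σ_{r=0}^{N} p^{−rmn} Σ_{a mod p^r, gcd(a,p)=1} S_{a,p^r}(b) equals p^{−N(mn−R)} · #{X mod p^N : X^T A X ≡ B (mod p^N)}, where X runs over n×m matrices mod p^N. Consequently, if n > (2γ + m(m−1))(R+1), the series 𝔖_p(b) = Σ_{r=0}^{∞} p^{−rmn} Σ_{a mod p^r, gcd(a,p)=1} S_{a,p^r}(b) converges and equals the local density α_p(A,B). -/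
open scoped BigOperators
open MeasureTheory Matrix Filter

noncomputable section

/-- Index type for pairs `(i,j)` with `i ≤ j` (the `R = m(m+1)/2` upper-triangular positions). -/
abbrev Idx (m : ℕ) : Type := {p : Fin m × Fin m // p.1 ≤ p.2}

instance idxNonempty (m : ℕ) [NeZero m] : Nonempty (Idx m) :=
  ⟨⟨(0, 0), le_rfl⟩⟩

/-- `e(z) = exp(2πiz)` -/
def eR (z : ℝ) : ℂ := Complex.exp (2 * Real.pi * Complex.I * z)

/-- `xᵢᵀ A xⱼ` for integer vectors. -/
def quadZ {m n : ℕ} (A : Matrix (Fin n) (Fin n) ℤ) (x : Fin m → Fin n → ℤ)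
    (i j : Fin m) : ℤ :=
  ∑ s, ∑ t, x i s * A s t * x j t

/-- `vᵢᵀ A vⱼ` for real vectors. -/
def quadR {m n : ℕ} (A : Matrix (Fin n) (Fin n) ℤ) (v : Fin m → Fin n → ℝ)
    (i j : Fin m) : ℝ :=
  ∑ s, ∑ t, v i s * (A s t : ℝ) * v j t

/-- The tuple `b = (B_{ij})_{1 ≤ i ≤ j ≤ m}`. -/
def bvec {m : ℕ} (B : Matrix (Fin m) (Fin m) ℤ) (p : Idx m) : ℤ := B p.1.1 p.1.2

/-- `γ_i`, defined by `B₁₁ = B_{ii}^{γ_i}`, i.e. `γ_i = log B₁₁ / log B_{ii}`. -/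
def gamI {m : ℕ} [NeZero m] (B : Matrix (Fin m) (Fin m) ℤ) (i : Fin m) : ℝ :=
  Real.log ((B 0 0 : ℤ) : ℝ) / Real.log ((B i i : ℤ) : ℝ)

/-- `γ = Σ 1/γ_i`. -/
def gamT {m : ℕ} [NeZero m] (B : Matrix (Fin m) (Fin m) ℤ) : ℝ :=
  ∑ i, (gamI B i)⁻¹

/-- `P_i = C^{1/γ_i} B_{ii}^{1/2}`. -/
def PP {m : ℕ} [NeZero m] (C : ℝ) (B : Matrix (Fin m) (Fin m) ℤ) (i : Fin m) : ℝ :=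
  C ^ (gamI B i)⁻¹ * ((B i i : ℤ) : ℝ) ^ ((1 : ℝ) / 2)

/-- `Π = ∏ P_i`. -/
def PiP {m : ℕ} [NeZero m] (C : ℝ) (B : Matrix (Fin m) (Fin m) ℤ) : ℝ :=
  ∏ i, PP C B i

/-- The box of integer tuples `(x₁,…,x_m)` with `|x_i| ≤ P_i` (max-norm). -/
def box (m n : ℕ) [NeZero m] (C : ℝ) (B : Matrix (Fin m) (Fin m) ℤ) :
    Finset (Fin m → Fin n → ℤ) :=
  Finset.Icc (fun i _ => -⌊PP C B i⌋) (fun i _ => ⌊PP C B i⌋)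

/-- The exponential sum `S(α, b)`. -/
def Ssum {m n : ℕ} [NeZero m] (A : Matrix (Fin n) (Fin n) ℤ) (C : ℝ)
    (B : Matrix (Fin m) (Fin m) ℤ) (α : Idx m → ℝ) (b : Idx m → ℤ) : ℂ :=
  ∑ x ∈ box m n C B,
    eR (∑ p : Idx m, α p * ((quadZ A x p.1.1 p.1.2 - b p : ℤ) : ℝ))

/-- The complete exponential sum `S_{a,q}(b)`. -/
def Saq {m n : ℕ} (A : Matrix (Fin n) (Fin n) ℤ) (q : ℤ) (a b : Idx m → ℤ) : ℂ :=
  ∑ z ∈ (Finset.Icc (fun _ _ => 0) (fun _ _ => q - 1) : Finset (Fin m → Fin n → ℤ)),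
    eR ((∑ p : Idx m, (a p : ℝ) * ((quadZ A z p.1.1 p.1.2 - b p : ℤ) : ℝ)) / (q : ℝ))

/-- Residue tuples `a (mod q)` with `gcd(q, a) = 1`. -/
def resid (m : ℕ) (q : ℤ) : Finset (Idx m → ℤ) :=
  (Finset.Icc (fun _ => 0) (fun _ => q - 1)).filter fun a =>
    Int.gcd q (Finset.univ.gcd a) = 1

/-- The `q`-th term of the singular series. -/
def STerm {m n : ℕ} (A : Matrix (Fin n) (Fin n) ℤ) (B : Matrix (Fin m) (Fin m) ℤ)
    (q : ℕ) : ℂ :=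
  ((q : ℂ) ^ (m * n))⁻¹ * ∑ a ∈ resid m (q : ℤ), Saq A (q : ℤ) a (bvec B)

/-- The truncated singular series `𝔖(Q; b)`. -/
def SingT {m n : ℕ} (A : Matrix (Fin n) (Fin n) ℤ) (B : Matrix (Fin m) (Fin m) ℤ)
    (Q : ℝ) : ℂ :=
  ∑ q ∈ Finset.Icc 1 ⌊Q⌋₊, STerm A B q

/-- The singular series `𝔖(b) = Σ_{q=1}^∞ q^{-mn} Σ_{a mod q, (a,q)=1} S_{a,q}(b)`. -/
def Sing {m n : ℕ} (A : Matrix (Fin n) (Fin n) ℤ) (B : Matrix (Fin m) (Fin m) ℤ) : ℂ :=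
  ∑' q : ℕ, STerm A B q

/-- The oscillatory integral `I` with weights `w_p`;
`I(P,β)` is obtained with `w_p = P_iP_jβ_{ij}` and `I(η)` with `w = η`. -/
def Iint {m n : ℕ} (A : Matrix (Fin n) (Fin n) ℤ) (w : Idx m → ℝ) : ℂ :=
  ∫ v in (Set.univ.pi fun _ : Fin m => Set.univ.pi fun _ : Fin n => Set.Icc (-1 : ℝ) 1),
    eR (∑ p : Idx m, w p * quadR A v p.1.1 p.1.2)

/-- The truncated singular integral `𝔍(Q; c)`. -/
def JintT {m n : ℕ} (A : Matrix (Fin n) (Fin n) ℤ) (Q : ℝ) (c : Idx m → ℝ) : ℂ :=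
  ∫ η in (Set.univ.pi fun _ : Idx m => Set.Icc (-Q) Q),
    Iint (n := n) A η * eR (-(∑ p : Idx m, η p * c p))

/-- The singular integral `𝔍(c)`. -/
def Jint {m n : ℕ} (A : Matrix (Fin n) (Fin n) ℤ) (c : Idx m → ℝ) : ℂ :=
  ∫ η : Idx m → ℝ, Iint (n := n) A η * eR (-(∑ p : Idx m, η p * c p))

/-- The major arc `M_{a,q}(Δ)` (with constant `c₀`). -/
def MArc {m : ℕ} [NeZero m] (C : ℝ) (B : Matrix (Fin m) (Fin m) ℤ) (c₀ Δ : ℝ)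
    (q : ℤ) (a : Idx m → ℤ) : Set (Idx m → ℝ) :=
  {α | (∀ p, 0 ≤ α p ∧ α p < 1) ∧
    ∀ p : Idx m, |(q : ℝ) * α p - (a p : ℝ)| ≤
      c₀ * PiP C B ^ Δ * (PP C B p.1.1 * PP C B p.1.2)⁻¹}

/-- The enlarged major arc `M'_{a,q}(Δ)` (with constant `c₀`). -/
def MArc' {m : ℕ} [NeZero m] (C : ℝ) (B : Matrix (Fin m) (Fin m) ℤ) (c₀ Δ : ℝ)
    (q : ℤ) (a : Idx m → ℤ) : Set (Idx m → ℝ) :=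
  {α | (∀ p, 0 ≤ α p ∧ α p < 1) ∧
    ∀ p : Idx m, |(q : ℝ) * α p - (a p : ℝ)| ≤
      c₀ * (q : ℝ) * PiP C B ^ Δ * (PP C B p.1.1 * PP C B p.1.2)⁻¹}

/-- Admissible pairs `(q, a)`: `1 ≤ q ≤ c₀Π^Δ`, `0 ≤ a_{ij} < q`, `gcd(q,a) = 1`. -/
def validAQ {m : ℕ} [NeZero m] (C : ℝ) (B : Matrix (Fin m) (Fin m) ℤ) (c₀ Δ : ℝ)
    (q : ℤ) (a : Idx m → ℤ) : Prop :=
  1 ≤ q ∧ (q : ℝ) ≤ c₀ * PiP C B ^ Δ ∧ (∀ p, 0 ≤ a p ∧ a p < q) ∧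
    Int.gcd q (Finset.univ.gcd a) = 1

/-- The major arcs `M(Δ)`. -/
def MSet {m : ℕ} [NeZero m] (C : ℝ) (B : Matrix (Fin m) (Fin m) ℤ) (c₀ Δ : ℝ) :
    Set (Idx m → ℝ) :=
  ⋃ q : ℤ, ⋃ a : Idx m → ℤ, ⋃ _ : validAQ C B c₀ Δ q a, MArc C B c₀ Δ q a

/-- `N(A,B)`: the number of integral representations of `B` by `A`. -/
def NAB (m n : ℕ) (A : Matrix (Fin n) (Fin n) ℤ) (B : Matrix (Fin m) (Fin m) ℤ) : ℕ :=
  Nat.card {X : Matrix (Fin n) (Fin m) ℤ | Xᵀ * A * X = B}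

/-- `#{X mod q : XᵀAX ≡ B (mod q)}`. -/
def locCount (m n : ℕ) (A : Matrix (Fin n) (Fin n) ℤ) (B : Matrix (Fin m) (Fin m) ℤ)
    (q : ℕ) : ℕ :=
  Nat.card {X : Matrix (Fin n) (Fin m) (ZMod q) |
    Xᵀ * A.map ((↑) : ℤ → ZMod q) * X = B.map ((↑) : ℤ → ZMod q)}

/-- The archimedean density `α_∞(A,B)`. -/
def alphaInf (m n : ℕ) (A : Matrix (Fin n) (Fin n) ℤ)
    (B : Matrix (Fin m) (Fin m) ℤ) : ℝ :=
  ((A.det : ℤ) : ℝ) ^ (-(m : ℝ) / 2) * ((B.det : ℤ) : ℝ) ^ (((n : ℝ) - m - 1) / 2) *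
    Real.pi ^ ((m : ℝ) * (2 * (n : ℝ) - m + 1) / 4) *
    ∏ j ∈ Finset.Ioc (n - m) n, (Real.Gamma ((j : ℝ) / 2))⁻¹

/-- `max_{1≤i≤j≤m} |η_{ij}|`. -/
def maxAbs {m : ℕ} [NeZero m] (η : Idx m → ℝ) : ℝ := ⨆ p : Idx m, |η p|

/-!
A normalised complete sum `q ^ (-mn) * S_{a,q}(b)` is the mean over `X` modulo `q` of a phase that
depends only on the fractions `a / q`, so it is unchanged when `(a, q)` is put in lowest terms.
Grouping all tuples `a` modulo `q` by their reduced denominator therefore turns the divisor sum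
`∑_{d ∣ q} STerm A B d` into `q ^ (-mn)` times the sum of `S_{a,q}(b)` over all `a` modulo `q`. By
orthogonality of characters that sum is `q ^ R` times the number of solutions of `XᵀAX ≡ B` modulo
`q`; symmetry allows one to impose only the congruences on and above the diagonal. The case
`q = p ^ N` is the partial sum of the local factor at `p`. If the local density is attained at all
large exponents, then the partial sums are eventually constant, so the terms eventually vanish.
-/

section Residues

variable {ι : Type*} [Fintype ι]

theorem gcd_mul_smul (k : ℕ) (q : ℤ) (a : ι → ℤ) :
    Int.gcd (k * q) (Finset.univ.gcd ((k : ℤ) • a)) = k * Int.gcd q (Finset.univ.gcd a) := by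
  have hgcd : Finset.univ.gcd ((k : ℤ) • a) = k * Finset.univ.gcd a := by
    calc Finset.univ.gcd ((k : ℤ) • a) = normalize (k : ℤ) * Finset.univ.gcd a :=
          Finset.gcd_mul_left
      _ = k * Finset.univ.gcd a := by rw [Int.normalize_coe_nat]
  rw [hgcd, Int.gcd_mul_left, Int.natAbs_natCast]

variable [DecidableEq ι]

theorem mem_Icc_zero_sub_one {q : ℤ} {a : ι → ℤ} :
    a ∈ Finset.Icc (fun _ => 0) (fun _ => q - 1) ↔ ∀ i, 0 ≤ a i ∧ a i < q := by
  simp only [Finset.mem_Icc, Pi.le_def, Int.le_sub_one_iff, forall_and]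

variable (ι) in
/-- The tuples of residues modulo `q`, represented by integers in `[0, q)`, whose entries have no
common factor with `q`; for `ι = Idx m` these are the numerators `resid m q`. -/
def primitiveResidues (q : ℤ) : Finset (ι → ℤ) :=
  (Finset.Icc (fun _ => 0) (fun _ => q - 1)).filter fun a => Int.gcd q (Finset.univ.gcd a) = 1

theorem mem_primitiveResidues {q : ℤ} {a : ι → ℤ} :
    a ∈ primitiveResidues ι q ↔
      (∀ i, 0 ≤ a i ∧ a i < q) ∧ Int.gcd q (Finset.univ.gcd a) = 1 := by
  rw [primitiveResidues, Finset.mem_filter, mem_Icc_zero_sub_one]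

theorem filter_gcd_eq_image_primitiveResidues {k : ℕ} (hk : 0 < k) (q : ℤ) :
    ((Finset.Icc (fun _ => 0) (fun _ => k * q - 1) : Finset (ι → ℤ)).filter fun a =>
        Int.gcd (k * q) (Finset.univ.gcd a) = k) =
      (primitiveResidues ι q).image ((k : ℤ) • ·) := by
  have hk' : (0 : ℤ) < k := Int.natCast_pos.mpr hk
  have hscale (a : ι → ℤ) : (k : ℤ) • a ∈ ((Finset.Icc (fun _ => 0) (fun _ => k * q - 1) :
      Finset (ι → ℤ)).filter fun a => Int.gcd (k * q) (Finset.univ.gcd a) = k) ↔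
        a ∈ primitiveResidues ι q := by
    simp only [Finset.mem_filter, mem_Icc_zero_sub_one, mem_primitiveResidues, gcd_mul_smul,
      Pi.smul_apply, smul_eq_mul, mul_nonneg_iff_of_pos_left hk', mul_lt_mul_iff_right₀ hk',
      mul_eq_left₀ hk.ne']
  ext a
  refine ⟨fun ha => ?_, fun ha => ?_⟩
  · have hdvd (i : ι) : (k : ℤ) ∣ a i := by
      rw [← (Finset.mem_filter.mp ha).2]
      exact (Int.gcd_dvd_right ..).trans (Finset.gcd_dvd (Finset.mem_univ i))
    choose c hc using hdvd
    obtain rfl : a = (k : ℤ) • c := funext hc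
    exact Finset.mem_image_of_mem _ ((hscale c).mp ha)
  · obtain ⟨c, hc, rfl⟩ := Finset.mem_image.mp ha
    exact (hscale c).mpr hc

theorem sum_Icc_eq_sum_divisors_primitiveResidues {M : Type*} [AddCommMonoid M]
    {f : ℕ → (ι → ℤ) → M}
    (hf : ∀ ⦃k q : ℕ⦄, 0 < k → 0 < q → ∀ a, f (k * q) ((k : ℤ) • a) = f q a)
    {q : ℕ} (hq : q ≠ 0) :
    ∑ a ∈ Finset.Icc (fun _ : ι => (0 : ℤ)) (fun _ => (q : ℤ) - 1), f q a =
      ∑ d ∈ q.divisors, ∑ a ∈ primitiveResidues ι d, f d a := by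
  have hmaps (a : ι → ℤ) : Int.gcd q (Finset.univ.gcd a) ∈ q.divisors :=
    Nat.mem_divisors.mpr ⟨Int.natCast_dvd_natCast.mp (Int.gcd_dvd_left ..), hq⟩
  rw [← Finset.sum_fiberwise_of_maps_to fun a _ => hmaps a,
    ← Nat.sum_div_divisors q fun d => ∑ a ∈ primitiveResidues ι d, f d a]
  refine Finset.sum_congr rfl fun k hk => ?_
  obtain ⟨d, rfl⟩ := Nat.dvd_of_mem_divisors hk
  have hk0 : 0 < k := Nat.pos_of_ne_zero (left_ne_zero_of_mul hq)
  have hd0 : 0 < d := Nat.pos_of_ne_zero (right_ne_zero_of_mul hq)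
  have hinj : Function.Injective (((k : ℤ) • ·) : (ι → ℤ) → ι → ℤ) :=
    smul_right_injective _ (Int.natCast_ne_zero.mpr hk0.ne')
  rw [Nat.mul_div_cancel_left d hk0, Nat.cast_mul, filter_gcd_eq_image_primitiveResidues hk0,
    Finset.sum_image hinj.injOn]
  exact Finset.sum_congr rfl fun a _ => hf hk0 hd0 a

end Residues

section Averages

theorem expect_comp_of_surjective {G H M : Type*} [AddGroup G] [Fintype G] [AddGroup H]
    [Fintype H] [AddCommMonoid M] [Module ℚ≥0 M] {φ : G →+ H} (hφ : Function.Surjective φ)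
    (f : H → M) : 𝔼 g, f (φ g) = 𝔼 h, f h := by
  have htranslate (h : H) : 𝔼 g, f (φ g + h) = 𝔼 g, f (φ g) := by
    obtain ⟨g₀, rfl⟩ := hφ h
    simpa using Fintype.expect_equiv (Equiv.addRight g₀) (fun g => f (φ g + φ g₀))
      (fun g => f (φ g)) fun g => by simp
  calc 𝔼 g, f (φ g) = 𝔼 h, 𝔼 g, f (φ g + h) := by
        simp only [htranslate, Fintype.expect_const]
    _ = 𝔼 g, 𝔼 h, f (φ g + h) := Finset.expect_comm ..
    _ = 𝔼 _g : G, 𝔼 h, f h := Finset.expect_congr rfl fun g _ =>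
        Fintype.expect_equiv (Equiv.addLeft (φ g)) _ _ fun _ => rfl
    _ = 𝔼 h, f h := Fintype.expect_const _

theorem addChar_map_sum {ι A M : Type*} [AddCommMonoid A] [CommMonoid M] (ψ : AddChar A M)
    (s : Finset ι) (f : ι → A) : ψ (∑ i ∈ s, f i) = ∏ i ∈ s, ψ (f i) :=
  map_prod ψ.toMonoidHom (fun i => Multiplicative.ofAdd (f i)) s

theorem sum_dotProduct_of_isPrimitive {ι R S : Type*} [Fintype ι] [DecidableEq ι] [CommRing R]
    [Fintype R] [DecidableEq R] [CommRing S] [IsDomain S] {ψ : AddChar R S} (hψ : ψ.IsPrimitive)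
    (c : ι → R) :
    ∑ a : ι → R, ψ (a ⬝ᵥ c) = if c = 0 then (Fintype.card R : S) ^ Fintype.card ι else 0 := by
  calc ∑ a : ι → R, ψ (a ⬝ᵥ c) = ∑ a : ι → R, ∏ i, ψ (a i * c i) := by
        simp only [dotProduct, addChar_map_sum]
    _ = ∏ i, ∑ x, ψ (x * c i) := (Fintype.prod_sum fun i x => ψ (x * c i)).symm
    _ = ∏ i, if c i = 0 then (Fintype.card R : S) else 0 := by
        simp only [AddChar.sum_mulShift _ hψ, Nat.cast_ite, Nat.cast_zero]
    _ = _ := by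
        rw [Finset.prod_ite_zero]
        simp [funext_iff]

end Averages

section ZMod

theorem bijOn_piMap_piFinset {ι α β : Type*} [Fintype ι] [DecidableEq ι] {s : Finset α}
    {f : α → β} (hf : Set.BijOn f s Set.univ) :
    Set.BijOn (fun (a : ι → α) i => f (a i)) ↑(Fintype.piFinset fun _ : ι => s) Set.univ := by
  refine ⟨Set.mapsTo_univ _ _, fun a ha b hb hab => funext fun i => ?_, fun y _ => ?_⟩
  · rw [Finset.mem_coe, Fintype.mem_piFinset] at ha hb
    exact hf.injOn (ha i) (hb i) (congrFun hab i)
  · choose a ha hay using fun i => hf.surjOn (Set.mem_univ (y i))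
    exact ⟨a, Finset.mem_coe.mpr (Fintype.mem_piFinset.mpr ha), funext hay⟩

theorem sum_eq_sum_univ_of_bijOn {α β M : Type*} [Fintype β] [AddCommMonoid M] {s : Finset α}
    {i : α → β} (hi : Set.BijOn i s Set.univ) (f : β → M) : ∑ a ∈ s, f (i a) = ∑ b, f b :=
  Finset.sum_nbij i (fun _ _ => Finset.mem_univ _) hi.injOn
    (by simpa only [Finset.coe_univ] using hi.surjOn) fun _ _ => rfl

variable {q : ℕ} [NeZero q]

variable (q) in
theorem bijOn_intCast_Icc :
    Set.BijOn ((↑) : ℤ → ZMod q) (Finset.Icc (0 : ℤ) ((q : ℤ) - 1)) Set.univ := by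
  refine ⟨Set.mapsTo_univ _ _, fun x hx y hy hxy => ?_, fun x _ => ⟨x.val, ?_, by simp⟩⟩
  · rw [Finset.mem_coe, Finset.mem_Icc, Int.le_sub_one_iff] at hx hy
    rw [ZMod.intCast_eq_intCast_iff'] at hxy
    rwa [Int.emod_eq_of_lt hx.1 hx.2, Int.emod_eq_of_lt hy.1 hy.2] at hxy
  · rw [Finset.mem_coe, Finset.mem_Icc, Int.le_sub_one_iff]
    exact ⟨Int.natCast_nonneg _, Int.ofNat_lt.mpr x.val_lt⟩

theorem sum_Icc_intCast {ι M : Type*} [Fintype ι] [DecidableEq ι] [AddCommMonoid M]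
    (f : (ι → ZMod q) → M) :
    ∑ a ∈ Finset.Icc (fun _ : ι => (0 : ℤ)) (fun _ => (q : ℤ) - 1), f (fun i => (a i : ZMod q)) =
      ∑ a, f a :=
  sum_eq_sum_univ_of_bijOn (bijOn_piMap_piFinset (bijOn_intCast_Icc q)) f

theorem sum_Icc_intCast_matrix {ι κ M : Type*} [Fintype ι] [DecidableEq ι] [Fintype κ]
    [DecidableEq κ] [AddCommMonoid M] (f : Matrix κ ι (ZMod q) → M) :
    ∑ z ∈ (Finset.Icc (fun _ _ => 0) (fun _ _ => (q : ℤ) - 1) : Finset (ι → κ → ℤ)),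
        f (Matrix.of fun k i => (z i k : ZMod q)) = ∑ X, f X := by
  rw [← (Matrix.transposeAddEquiv ι κ (ZMod q)).toEquiv.sum_comp f]
  exact sum_eq_sum_univ_of_bijOn
    (bijOn_piMap_piFinset (bijOn_piMap_piFinset (bijOn_intCast_Icc q))) fun z => f (Matrix.of z)ᵀ

theorem eR_intCast_div (k : ℤ) : eR (k / q) = ZMod.stdAddChar (k : ZMod q) := by
  rw [eR, ZMod.stdAddChar_coe]
  push_cast
  ring_nf

theorem stdAddChar_natCast_mul {k : ℕ} [NeZero k] (x : ZMod (k * q)) :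
    ZMod.stdAddChar ((k : ZMod (k * q)) * x) =
      ZMod.stdAddChar (ZMod.castHom (dvd_mul_left q k) (ZMod q) x) := by
  obtain ⟨j, rfl⟩ := ZMod.intCast_surjective x
  have hk : (k : ℝ) ≠ 0 := NeZero.ne _
  rw [map_intCast, ← Int.cast_natCast (R := ZMod (k * q)), ← Int.cast_mul, ← eR_intCast_div,
    ← eR_intCast_div]
  push_cast
  rw [mul_div_mul_left _ _ hk]

end ZMod

section Matrices

theorem mapMatrix_surjective {ι κ R S : Type*} [AddZeroClass R] [AddZeroClass S] {φ : R →+ S}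
    (hφ : Function.Surjective φ) :
    Function.Surjective (φ.mapMatrix : Matrix ι κ R →+ Matrix ι κ S) := fun Y => by
  choose X hX using fun i j => hφ (Y i j)
  exact ⟨Matrix.of X, Matrix.ext hX⟩

theorem isSymm_transpose_mul_mul {ι κ R : Type*} [Fintype κ] [CommSemiring R]
    {S : Matrix κ κ R} (hS : S.IsSymm) (X : Matrix κ ι R) : (Xᵀ * S * X).IsSymm := by
  rw [Matrix.IsSymm, Matrix.transpose_mul, Matrix.transpose_mul, Matrix.transpose_transpose, hS.eq,
    Matrix.mul_assoc]

theorem isSymm_eq_iff_forall_le {ι R : Type*} [LinearOrder ι] {S T : Matrix ι ι R} (hS : S.IsSymm)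
    (hT : T.IsSymm) : S = T ↔ ∀ i j, i ≤ j → S i j = T i j := by
  refine ⟨fun h i j _ => by rw [h], fun h => Matrix.ext fun i j => ?_⟩
  rcases le_total i j with hij | hji
  · exact h i j hij
  · rw [← hS.apply, ← hT.apply, h j i hji]

end Matrices

section GramMatrix

variable {m n : ℕ} (A : Matrix (Fin n) (Fin n) ℤ) (b : Idx m → ℤ)

/-- The entries on and above the diagonal of `XᵀAX`, minus the target values `b`, for a matrix `X`
modulo `q`. For symmetric `A` and `B`, its zeros for `b = bvec B` are the solutions counted by
`locCount`; the phase of `Saq A q a b` is its pairing with `a`. -/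
def gramResidual {q : ℕ} (X : Matrix (Fin n) (Fin m) (ZMod q)) : Idx m → ZMod q :=
  fun p => (Xᵀ * A.map ((↑) : ℤ → ZMod q) * X) p.1.1 p.1.2 - b p

variable {A} in
theorem gramResidual_bvec_eq_zero_iff (hA : A.IsSymm) {B : Matrix (Fin m) (Fin m) ℤ}
    (hB : B.IsSymm) {q : ℕ} (X : Matrix (Fin n) (Fin m) (ZMod q)) :
    gramResidual A (bvec B) X = 0 ↔
      Xᵀ * A.map ((↑) : ℤ → ZMod q) * X = B.map ((↑) : ℤ → ZMod q) := by
  rw [isSymm_eq_iff_forall_le (isSymm_transpose_mul_mul (hA.map _) X) (hB.map _)]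
  simp [funext_iff, gramResidual, bvec, sub_eq_zero]

theorem gramResidual_of_intCast (q : ℕ) (z : Fin m → Fin n → ℤ) (p : Idx m) :
    gramResidual A b (Matrix.of fun s i => (z i s : ZMod q)) p =
      ((quadZ A z p.1.1 p.1.2 - b p : ℤ) : ZMod q) := by
  simp only [gramResidual, quadZ, Matrix.mul_apply, Matrix.transpose_apply, Matrix.of_apply,
    Matrix.map_apply, Finset.sum_mul, Int.cast_sub, Int.cast_sum, Int.cast_mul]
  rw [Finset.sum_comm]

theorem gramResidual_map_castHom {d q : ℕ} (h : d ∣ q) (X : Matrix (Fin n) (Fin m) (ZMod q)) :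
    gramResidual A b (X.map (ZMod.castHom h (ZMod d))) =
      ZMod.castHom h (ZMod d) ∘ gramResidual A b X := by
  have hA : A.map ((↑) : ℤ → ZMod d) =
      (A.map ((↑) : ℤ → ZMod q)).map (ZMod.castHom h (ZMod d)) := by
    ext
    simp
  funext p
  rw [Function.comp_apply, gramResidual, gramResidual, hA, ← Matrix.transpose_map,
    ← Matrix.map_mul, ← Matrix.map_mul, Matrix.map_apply, map_sub, map_intCast]

theorem Saq_eq_sum_stdAddChar (q : ℕ) [NeZero q] (a : Idx m → ℤ) :
    Saq A q a b = ∑ X : Matrix (Fin n) (Fin m) (ZMod q),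
      ZMod.stdAddChar ((fun p => (a p : ZMod q)) ⬝ᵥ gramResidual A b X) := by
  rw [← sum_Icc_intCast_matrix, Saq]
  refine Finset.sum_congr rfl fun z _ => ?_
  simp only [dotProduct, gramResidual_of_intCast, ← Int.cast_mul, ← Int.cast_sum]
  rw [← eR_intCast_div]
  push_cast
  rfl

theorem inv_mul_Saq_eq_expect (q : ℕ) [NeZero q] (a : Idx m → ℤ) :
    ((q : ℂ) ^ (m * n))⁻¹ * Saq A q a b = 𝔼 X : Matrix (Fin n) (Fin m) (ZMod q),
      ZMod.stdAddChar ((fun p => (a p : ZMod q)) ⬝ᵥ gramResidual A b X) := by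
  have hcard : Fintype.card (Matrix (Fin n) (Fin m) (ZMod q)) = q ^ (m * n) := by
    rw [← Nat.card_eq_fintype_card, Matrix, Nat.card_fun, Nat.card_fun, Nat.card_zmod,
      Nat.card_fin, Nat.card_fin, pow_mul]
  rw [Saq_eq_sum_stdAddChar, Fintype.expect_eq_sum_div_card, hcard, Nat.cast_pow, div_eq_inv_mul]

theorem inv_mul_Saq_mul {k q : ℕ} (hk : 0 < k) (hq : 0 < q) (a : Idx m → ℤ) :
    (((k * q : ℕ) : ℂ) ^ (m * n))⁻¹ * Saq A (k * q : ℕ) ((k : ℤ) • a) b =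
      ((q : ℂ) ^ (m * n))⁻¹ * Saq A q a b := by
  have : NeZero k := ⟨hk.ne'⟩
  have : NeZero q := ⟨hq.ne'⟩
  set φ := ZMod.castHom (dvd_mul_left q k) (ZMod q)
  have hφ : Function.Surjective (φ : ZMod (k * q) →+ ZMod q) :=
    ZMod.castHom_surjective (dvd_mul_left q k)
  have hsmul : (fun p => (((k : ℤ) • a) p : ZMod (k * q))) =
      (k : ZMod (k * q)) • fun p => (a p : ZMod (k * q)) := by
    ext p
    simp
  have hcast : φ ∘ (fun p => (a p : ZMod (k * q))) = fun p => (a p : ZMod q) :=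
    funext fun p => map_intCast φ (a p)
  rw [inv_mul_Saq_eq_expect, inv_mul_Saq_eq_expect,
    ← expect_comp_of_surjective (mapMatrix_surjective hφ)]
  refine Finset.expect_congr rfl fun X _ => ?_
  calc ZMod.stdAddChar ((fun p => (((k : ℤ) • a) p : ZMod (k * q))) ⬝ᵥ gramResidual A b X)
      = ZMod.stdAddChar ((k : ZMod (k * q)) *
          ((fun p => (a p : ZMod (k * q))) ⬝ᵥ gramResidual A b X)) := by
        rw [hsmul, smul_dotProduct, smul_eq_mul]
    _ = ZMod.stdAddChar (φ ((fun p => (a p : ZMod (k * q))) ⬝ᵥ gramResidual A b X)) :=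
        stdAddChar_natCast_mul _
    _ = ZMod.stdAddChar ((fun p => (a p : ZMod q)) ⬝ᵥ gramResidual A b (X.map φ)) := by
        rw [RingHom.map_dotProduct, gramResidual_map_castHom, hcast]

end GramMatrix

section SingularSeries

variable {m n : ℕ} {A : Matrix (Fin n) (Fin n) ℤ} {B : Matrix (Fin m) (Fin m) ℤ}

theorem card_Idx (m : ℕ) : Fintype.card (Idx m) = m * (m + 1) / 2 := by
  rw [← Fintype.card_congr Sym2.sortEquiv, Sym2.card, Fintype.card_fin, Nat.choose_two_right,
    Nat.add_sub_cancel, mul_comm]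

theorem sum_Icc_Saq_bvec (hA : A.IsSymm) (hB : B.IsSymm) (q : ℕ) [NeZero q] :
    ∑ a ∈ Finset.Icc (fun _ : Idx m => (0 : ℤ)) (fun _ => (q : ℤ) - 1), Saq A q a (bvec B) =
      (q : ℂ) ^ (m * (m + 1) / 2) * locCount m n A B q := by
  have horth (X : Matrix (Fin n) (Fin m) (ZMod q)) :
      ∑ a ∈ Finset.Icc (fun _ : Idx m => (0 : ℤ)) (fun _ => (q : ℤ) - 1),
          ZMod.stdAddChar ((fun p => (a p : ZMod q)) ⬝ᵥ gramResidual A (bvec B) X) =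
        if Xᵀ * A.map ((↑) : ℤ → ZMod q) * X = B.map ((↑) : ℤ → ZMod q) then
          (q : ℂ) ^ (m * (m + 1) / 2) else 0 := by
    rw [sum_Icc_intCast fun a => ZMod.stdAddChar (a ⬝ᵥ gramResidual A (bvec B) X),
      sum_dotProduct_of_isPrimitive (ZMod.isPrimitive_stdAddChar q), ZMod.card, card_Idx]
    simp only [gramResidual_bvec_eq_zero_iff hA hB]
  simp only [Saq_eq_sum_stdAddChar]
  rw [Finset.sum_comm, Finset.sum_congr rfl fun X _ => horth X, ← Finset.sum_filter,
    Finset.sum_const, nsmul_eq_mul, mul_comm, locCount, Set.coe_ofPred, Nat.card_eq_fintype_card,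
    Fintype.card_subtype]

theorem sum_divisors_STerm_eq_sum_Saq {q : ℕ} (hq : q ≠ 0) :
    ∑ d ∈ q.divisors, STerm A B d = ((q : ℂ) ^ (m * n))⁻¹ *
      ∑ a ∈ Finset.Icc (fun _ : Idx m => (0 : ℤ)) (fun _ => (q : ℤ) - 1),
        Saq A q a (bvec B) := by
  simp only [STerm, Finset.mul_sum]
  exact (sum_Icc_eq_sum_divisors_primitiveResidues
    (fun _ _ hk hd a => inv_mul_Saq_mul A (bvec B) hk hd a) hq).symm

theorem sum_divisors_STerm (hA : A.IsSymm) (hB : B.IsSymm) {q : ℕ} (hq : q ≠ 0) :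
    ∑ d ∈ q.divisors, STerm A B d =
      (q : ℂ) ^ (-((m : ℤ) * n - m * (m + 1) / 2)) * locCount m n A B q := by
  have : NeZero q := ⟨hq⟩
  rw [sum_divisors_STerm_eq_sum_Saq hq, sum_Icc_Saq_bvec hA hB, ← mul_assoc, neg_sub,
    zpow_sub₀ (Nat.cast_ne_zero.mpr hq), div_eq_inv_mul]
  norm_cast

theorem STerm_pow (p r : ℕ) :
    STerm A B (p ^ r) = (p : ℂ) ^ (-((r : ℤ) * ((m : ℤ) * (n : ℤ)))) *
      ∑ a ∈ resid m ((p : ℤ) ^ r), Saq A ((p : ℤ) ^ r) a (bvec B) := by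
  rw [STerm, Nat.cast_pow, Nat.cast_pow, ← pow_mul, _root_.zpow_neg]
  norm_cast

theorem sum_range_STerm_prime_pow (hA : A.IsSymm) (hB : B.IsSymm) {p : ℕ} (hp : p.Prime)
    (N : ℕ) :
    ∑ r ∈ Finset.range (N + 1), STerm A B (p ^ r) =
      (p : ℂ) ^ (-(N : ℤ) * ((m : ℤ) * (n : ℤ) - (m : ℤ) * ((m : ℤ) + 1) / 2)) *
        locCount m n A B (p ^ N) := by
  rw [← Nat.sum_divisors_prime_pow hp, sum_divisors_STerm hA hB (pow_ne_zero N hp.ne_zero),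
    Nat.cast_pow, ← zpow_natCast, ← _root_.zpow_mul, neg_mul_comm]

end SingularSeries

theorem hasSum_of_eventually_sum_range_eq {M : Type*} [AddCommGroup M] [TopologicalSpace M]
    {f : ℕ → M} {s : M} (h : ∀ᶠ N in atTop, ∑ r ∈ Finset.range N, f r = s) : HasSum f s := by
  obtain ⟨N, hN⟩ := eventually_atTop.mp h
  rw [← hN N le_rfl]
  refine hasSum_sum_of_ne_finset_zero fun r hr => ?_
  have hr : N ≤ r := by simpa using hr
  have hstep := hN (r + 1) (by lia)
  rwa [Finset.sum_range_succ, hN r hr, add_eq_left] at hstep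

theorem stmt15_general {m n : ℕ} {A : Matrix (Fin n) (Fin n) ℤ} (hA : A.IsSymm)
    {B : Matrix (Fin m) (Fin m) ℤ} (hB : B.IsSymm) {p : ℕ} (hp : p.Prime) :
    (∀ N : ℕ,
        ∑ r ∈ Finset.range (N + 1),
            ((p : ℂ) ^ (-((r : ℤ) * ((m : ℤ) * (n : ℤ))))) *
              ∑ a ∈ resid m ((p : ℤ) ^ r), Saq A ((p : ℤ) ^ r) a (bvec B) =
          ((p : ℂ) ^ (-(N : ℤ) * ((m : ℤ) * (n : ℤ) - (m : ℤ) * ((m : ℤ) + 1) / 2))) *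
            (locCount m n A B (p ^ N) : ℂ)) ∧
      ∀ α : ℝ,
        (∀ᶠ t : ℕ in Filter.atTop,
          α = (p : ℝ) ^ (-(t : ℤ) * ((m : ℤ) * (n : ℤ) - (m : ℤ) * ((m : ℤ) + 1) / 2)) *
            (locCount m n A B (p ^ t) : ℝ)) →
        HasSum (fun r : ℕ =>
            ((p : ℂ) ^ (-((r : ℤ) * ((m : ℤ) * (n : ℤ))))) *
              ∑ a ∈ resid m ((p : ℤ) ^ r), Saq A ((p : ℤ) ^ r) a (bvec B))
          ((α : ℝ) : ℂ) := by
  simp only [← STerm_pow]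
  refine ⟨sum_range_STerm_prime_pow hA hB hp, fun α hα => hasSum_of_eventually_sum_range_eq ?_⟩
  rw [← map_add_atTop_eq_nat 1, eventually_map]
  filter_upwards [hα] with t ht
  rw [sum_range_STerm_prime_pow hA hB hp, ht]
  push_cast
  rfl

/-- local factors of the singular series. -/
theorem stmt15 (m n : ℕ) [NeZero m] [NeZero n]
    (A : Matrix (Fin n) (Fin n) ℤ) (hAs : A.IsSymm)
    (hApd : (A.map ((↑) : ℤ → ℝ)).PosDef)
    (B : Matrix (Fin m) (Fin m) ℤ) (hBs : B.IsSymm)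
    (hBpd : (B.map ((↑) : ℤ → ℝ)).PosDef)
    (hBmono : ∀ i j : Fin m, i ≤ j → B i i ≤ B j j)
    (hBoff : ∀ i j : Fin m, i < j → |B i j| ≤ B i i)
    (hB11 : 2 ≤ B 0 0) :
    ∀ p : ℕ, p.Prime →
      (∀ N : ℕ,
        ∑ r ∈ Finset.range (N + 1),
            ((p : ℂ) ^ (-((r : ℤ) * ((m : ℤ) * (n : ℤ))))) *
              ∑ a ∈ resid m ((p : ℤ) ^ r), Saq A ((p : ℤ) ^ r) a (bvec B) =
          ((p : ℂ) ^ (-(N : ℤ) * ((m : ℤ) * (n : ℤ) - (m : ℤ) * ((m : ℤ) + 1) / 2))) *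
            (locCount m n A B (p ^ N) : ℂ)) ∧
      ((n : ℝ) > (2 * gamT B + (m : ℝ) * ((m : ℝ) - 1)) *
          ((m : ℝ) * ((m : ℝ) + 1) / 2 + 1) →
        ∀ α : ℝ,
          (∀ᶠ t : ℕ in Filter.atTop,
            α = (p : ℝ) ^ (-(t : ℤ) * ((m : ℤ) * (n : ℤ) - (m : ℤ) * ((m : ℤ) + 1) / 2)) *
              (locCount m n A B (p ^ t) : ℝ)) →
          HasSum (fun r : ℕ =>
              ((p : ℂ) ^ (-((r : ℤ) * ((m : ℤ) * (n : ℤ))))) *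
                ∑ a ∈ resid m ((p : ℤ) ^ r), Saq A ((p : ℤ) ^ r) a (bvec B))
            ((α : ℝ) : ℂ)) := by
  intro p hp
  have hgen := stmt15_general hAs hBs hp
  exact ⟨hgen.1, fun _ => hgen.2⟩
end
end

section
/- Let c = (c_{ij})_{1≤i≤j≤m} with c_{ij} = (P_iP_j)^{−1}B_{ij}, and let V(c) ⊂ ℝ^{mn} be the real variety of tuples (x_1,…,x_m), x_i ∈ ℝ^n, satisfying x_i^T A x_j = c_{ij} for all 1 ≤ i ≤ j ≤ m. Then (i) V(c) is non-empty, and (ii) V(c) is non-singular: at every point of V(c), the R×mn Jacobian matrix of the R forms G_{ij}(x) = x_i^T A x_j − c_{ij} (1 ≤ i ≤ j ≤ m) with respect to the mn coordinates has full rank R. In particular, any real n×m matrix X with X^T A X equal to the nonsingular matrix (c_{ij})_{1≤i,j≤m} has rank m. -/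
open scoped BigOperators
open MeasureTheory Matrix Filter

noncomputable section

/-!
The Gram map `x ↦ x A xᵀ` (tuples being matrices of row vectors) has differential
`h ↦ h A xᵀ + x A hᵀ` at `x`. Where `G = x A xᵀ` is invertible, `h = ½ S G⁻¹ x` solves
`h A xᵀ + x A hᵀ = S` for every symmetric `S`, so the `R` upper triangular entries of the Gram
matrix have independent differentials there. Dividing the `i`-th vector by `Pᵢ` turns a point of
`x A xᵀ = B` into a point of `V(c)`, and `c` is nonsingular because `B` is.
-/

section SymmetricMatrices

/-- The positions `(i, j)` with `i ≤ j` of the independent entries of a symmetric matrix; this is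
`Idx` for an arbitrary linearly ordered index type. -/
abbrev UpperIdx (m : Type*) [LinearOrder m] : Type _ := {p : m × m // p.1 ≤ p.2}

variable {m R : Type*} [LinearOrder m]

lemma eq_of_isSymm_of_forall_le {S T : Matrix m m R} (hS : S.IsSymm) (hT : T.IsSymm)
    (h : ∀ p : UpperIdx m, S p.1.1 p.1.2 = T p.1.1 p.1.2) : S = T := by
  ext i j
  rcases le_total i j with hij | hji
  · exact h ⟨(i, j), hij⟩
  · rw [← hS.apply, ← hT.apply]
    exact h ⟨(j, i), hji⟩

lemma exists_isSymm_forall_le_eq (T : UpperIdx m → R) :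
    ∃ S : Matrix m m R, S.IsSymm ∧ ∀ p : UpperIdx m, S p.1.1 p.1.2 = T p := by
  refine ⟨of fun i j => T ⟨(min i j, max i j), min_le_max⟩, IsSymm.ext fun i j => ?_, fun p => ?_⟩
  · simp only [of_apply, min_comm j, max_comm j]
  · simp only [of_apply, min_eq_left p.2, max_eq_right p.2]

end SymmetricMatrices

lemma rank_eq_card_of_isUnit_mul {m n R : Type*} [Fintype m] [DecidableEq m] [Fintype n]
    [CommRing R] [Nontrivial R] {M : Matrix m n R} {X : Matrix n m R} (h : IsUnit (M * X)) :
    X.rank = Fintype.card m :=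
  le_antisymm X.rank_le_card_width <|
    calc Fintype.card m = (M * X).rank := (rank_of_isUnit _ h).symm
      _ ≤ X.rank := rank_mul_le_right M X

section Gram

variable {m n R : Type*} [Fintype n] [CommRing R] {A : Matrix n n R}

/-- The Gram matrix `(xᵢᵀ A xⱼ)` of a tuple `x` of vectors with respect to the bilinear form `A`.
The tuple is read as the matrix with rows `xᵢ`, hence the transpose on the right. -/
def gramMatrix (A : Matrix n n R) (x : m → n → R) : Matrix m m R :=
  of x * A * (of x)ᵀ

/-- The differential of the Gram map `gramMatrix A` at `x` in the direction `h`, given by its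
algebraic formula so that it makes sense over any commutative ring. -/
def gramDifferential (A : Matrix n n R) (x h : m → n → R) : Matrix m m R :=
  of h * A * (of x)ᵀ + of x * A * (of h)ᵀ

lemma mul_mul_transpose_apply (A : Matrix n n R) (x y : m → n → R) (i j : m) :
    (of x * A * (of y)ᵀ) i j = ∑ s, ∑ t, x i s * A s t * y j t := by
  simp only [mul_apply, of_apply, transpose_apply, Finset.sum_mul]
  exact Finset.sum_comm

lemma isSymm_gramMatrix (hA : A.IsSymm) (x : m → n → R) : (gramMatrix A x).IsSymm := by
  simp only [gramMatrix, Matrix.IsSymm, transpose_mul, transpose_transpose, hA.eq, Matrix.mul_assoc]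

lemma exists_gramDifferential_eq [Fintype m] [DecidableEq m] [Invertible (2 : R)] (hA : A.IsSymm)
    {x : m → n → R} (hx : IsUnit (gramMatrix A x)) {S : Matrix m m R} (hS : S.IsSymm) :
    ∃ h, gramDifferential A x h = S := by
  let h : Matrix m n R := (⅟2 : R) • (S * (gramMatrix A x)⁻¹ * of x)
  have left_half : h * A * (of x)ᵀ = (⅟2 : R) • S :=
    calc h * A * (of x)ᵀ = (⅟2 : R) • (S * ((gramMatrix A x)⁻¹ * gramMatrix A x)) := by
          simp only [h, gramMatrix, smul_mul, Matrix.mul_assoc]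
      _ = (⅟2 : R) • S := by rw [nonsing_inv_mul _ ((isUnit_iff_isUnit_det _).1 hx), Matrix.mul_one]
  have right_half : of x * A * hᵀ = (⅟2 : R) • S :=
    calc of x * A * hᵀ = (h * A * (of x)ᵀ)ᵀ := by
          simp only [transpose_mul, transpose_transpose, hA.eq, Matrix.mul_assoc]
      _ = (⅟2 : R) • S := by rw [left_half, transpose_smul, hS.eq]
  refine ⟨of.symm h, ?_⟩
  rw [gramDifferential, Equiv.apply_symm_apply, left_half, right_half,
    invOf_two_smul_add_invOf_two_smul]

end Gram

section Derivative

variable {m n 𝕜 : Type*} [Fintype n] [NontriviallyNormedField 𝕜] {A : Matrix n n 𝕜}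

lemma differentiable_gramMatrix_apply [Finite m] (A : Matrix n n 𝕜) (i j : m) :
    Differentiable 𝕜 fun y : m → n → 𝕜 => gramMatrix A y i j := by
  cases nonempty_fintype m
  simp only [gramMatrix, mul_mul_transpose_apply]
  fun_prop

lemma fderiv_gramMatrix_apply [Finite m] (A : Matrix n n 𝕜) (x h : m → n → 𝕜) (i j : m) :
    fderiv 𝕜 (fun y => gramMatrix A y i j) x h = gramDifferential A x h i j := by
  cases nonempty_fintype m
  let coord (k : m) (s : n) : (m → n → 𝕜) →L[𝕜] 𝕜 :=
    (ContinuousLinearMap.proj s : (n → 𝕜) →L[𝕜] 𝕜) ∘L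
      (ContinuousLinearMap.proj k : (m → n → 𝕜) →L[𝕜] n → 𝕜)
  have hasFDerivAt_entry : HasFDerivAt (fun y : m → n → 𝕜 => gramMatrix A y i j)
      (∑ s, ∑ t, ((x i s * A s t) • coord j t + x j t • A s t • coord i s)) x := by
    simp only [gramMatrix, mul_mul_transpose_apply]
    exact .fun_sum fun s _ => .fun_sum fun t _ =>
      ((coord i s).hasFDerivAt.mul_const (A s t)).mul (coord j t).hasFDerivAt
  rw [hasFDerivAt_entry.fderiv]
  simp only [gramDifferential, Matrix.add_apply, mul_mul_transpose_apply, coord,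
    _root_.sum_apply, _root_.add_apply, _root_.smul_apply, ContinuousLinearMap.comp_apply,
    ContinuousLinearMap.proj_apply, smul_eq_mul, ← Finset.sum_add_distrib]
  exact Finset.sum_congr rfl fun s _ => Finset.sum_congr rfl fun t _ => by ring

lemma fderiv_gramMatrix_sub_apply [Finite m] [LinearOrder m] (A : Matrix n n 𝕜)
    (c : UpperIdx m → 𝕜) (x h : m → n → 𝕜) (p : UpperIdx m) :
    fderiv 𝕜 (fun (y : m → n → 𝕜) (q : UpperIdx m) => gramMatrix A y q.1.1 q.1.2 - c q) x h p =
      gramDifferential A x h p.1.1 p.1.2 := by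
  cases nonempty_fintype m
  have differentiableAt (q : UpperIdx m) : DifferentiableAt 𝕜
      (fun y : m → n → 𝕜 => gramMatrix A y q.1.1 q.1.2 - c q) x :=
    (differentiable_gramMatrix_apply A q.1.1 q.1.2 x).sub_const (c q)
  rw [fderiv_pi differentiableAt, ContinuousLinearMap.pi_apply, fderiv_sub_const,
    fderiv_gramMatrix_apply]

lemma surjective_fderiv_gramMatrix_sub [Fintype m] [LinearOrder m] [NeZero (2 : 𝕜)]
    (hA : A.IsSymm) (c : UpperIdx m → 𝕜) {x : m → n → 𝕜} (hx : IsUnit (gramMatrix A x)) :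
    Function.Surjective
      (fderiv 𝕜 (fun y (p : UpperIdx m) => gramMatrix A y p.1.1 p.1.2 - c p) x) := by
  let : Invertible (2 : 𝕜) := invertibleOfNonzero two_ne_zero
  intro T
  obtain ⟨S, hS, hST⟩ := exists_isSymm_forall_le_eq T
  obtain ⟨h, hh⟩ := exists_gramDifferential_eq hA hx hS
  exact ⟨h, funext fun p => by rw [fderiv_gramMatrix_sub_apply, hh, hST]⟩

end Derivative

section Rescale

variable {m n K : Type*} [Field K]

/-- The matrix `c = (B_{ij} / (P_i P_j))` defining the variety `V(c)`; it is meaningful only when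
every `P_i` is nonzero. -/
def rescale (P : m → K) (B : Matrix m m K) : Matrix m m K :=
  of fun i j => (P i * P j)⁻¹ * B i j

lemma isSymm_rescale (P : m → K) {B : Matrix m m K} (hB : B.IsSymm) : (rescale P B).IsSymm :=
  IsSymm.ext fun i j => by simp only [rescale, of_apply, hB.apply, mul_comm (P j)]

lemma gramMatrix_inv_smul [Fintype n] (A : Matrix n n K) (P : m → K) (x : m → n → K) :
    gramMatrix A (fun i => (P i)⁻¹ • x i) = rescale P (gramMatrix A x) := by
  ext i j
  simp only [rescale, of_apply, gramMatrix, mul_mul_transpose_apply, Finset.mul_sum, mul_inv,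
    Pi.smul_apply, smul_eq_mul]
  exact Finset.sum_congr rfl fun s _ => Finset.sum_congr rfl fun t _ => by ring

variable [Fintype m] [DecidableEq m]

lemma rescale_eq_diagonal_mul_mul_diagonal (P : m → K) (B : Matrix m m K) :
    rescale P B = diagonal P⁻¹ * B * diagonal P⁻¹ := by
  ext i j
  simp only [rescale, of_apply, mul_diagonal, diagonal_mul, mul_inv, Pi.inv_apply]
  ring

lemma isUnit_rescale {P : m → K} (hP : ∀ i, P i ≠ 0) {B : Matrix m m K} (hB : IsUnit B) :
    IsUnit (rescale P B) := by
  have isUnit_diagonal_inv : IsUnit (diagonal P⁻¹) :=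
    isUnit_diagonal.2 <| Pi.isUnit_iff.2 fun i => (inv_ne_zero (hP i)).isUnit
  rw [rescale_eq_diagonal_mul_mul_diagonal]
  exact (isUnit_diagonal_inv.mul hB).mul isUnit_diagonal_inv

end Rescale

lemma quadR_eq_gramMatrix_apply {m n : ℕ} (A : Matrix (Fin n) (Fin n) ℤ) (v : Fin m → Fin n → ℝ)
    (i j : Fin m) : quadR A v i j = gramMatrix (A.map ((↑) : ℤ → ℝ)) v i j :=
  (mul_mul_transpose_apply (A.map ((↑) : ℤ → ℝ)) v v i j).symm

lemma PP_pos {m : ℕ} [NeZero m] {C : ℝ} (hC : 0 < C) {B : Matrix (Fin m) (Fin m) ℤ} {i : Fin m}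
    (hi : (0 : ℝ) < B i i) : 0 < PP C B i := by
  unfold PP
  positivity

theorem stmt16_general {m n 𝕜 : Type*} [Fintype m] [LinearOrder m] [Fintype n]
    [NontriviallyNormedField 𝕜] [NeZero (2 : 𝕜)]
    {A : Matrix n n 𝕜} (hA : A.IsSymm) {B : Matrix m m 𝕜} (hBs : B.IsSymm) (hB : IsUnit B)
    {P : m → 𝕜} (hP : ∀ i, P i ≠ 0)
    (hy : ∃ y : m → n → 𝕜, ∀ p : UpperIdx m, gramMatrix A y p.1.1 p.1.2 = B p.1.1 p.1.2) :
    (∃ x : m → n → 𝕜,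
      ∀ p : UpperIdx m, gramMatrix A x p.1.1 p.1.2 = rescale P B p.1.1 p.1.2) ∧
    (∀ x : m → n → 𝕜,
      (∀ p : UpperIdx m, gramMatrix A x p.1.1 p.1.2 = rescale P B p.1.1 p.1.2) →
      Function.Surjective (fderiv 𝕜 (fun y (p : UpperIdx m) =>
        gramMatrix A y p.1.1 p.1.2 - rescale P B p.1.1 p.1.2) x)) ∧
    (∀ X : Matrix n m 𝕜, Xᵀ * A * X = rescale P B → X.rank = Fintype.card m) := by
  have hc : IsUnit (rescale P B) := isUnit_rescale hP hB
  refine ⟨?_, fun x hx => ?_, fun X hX => ?_⟩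
  · obtain ⟨y, hy⟩ := hy
    have gram_y : gramMatrix A y = B := eq_of_isSymm_of_forall_le (isSymm_gramMatrix hA y) hBs hy
    exact ⟨fun i => (P i)⁻¹ • y i, fun p => by rw [gramMatrix_inv_smul, gram_y]⟩
  · have gram_x : gramMatrix A x = rescale P B :=
      eq_of_isSymm_of_forall_le (isSymm_gramMatrix hA x) (isSymm_rescale P hBs) hx
    exact surjective_fderiv_gramMatrix_sub hA _ (gram_x ▸ hc)
  · exact rank_eq_card_of_isUnit_mul (hX ▸ hc)

/-- Lemma 6.2, the variety `V(c)` is non-empty and non-singular. -/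
theorem stmt16 (m n : ℕ) [NeZero m] [NeZero n]
    (A : Matrix (Fin n) (Fin n) ℤ) (hAs : A.IsSymm)
    (hApd : (A.map ((↑) : ℤ → ℝ)).PosDef)
    (B : Matrix (Fin m) (Fin m) ℤ) (hBs : B.IsSymm)
    (hBpd : (B.map ((↑) : ℤ → ℝ)).PosDef)
    (hBmono : ∀ i j : Fin m, i ≤ j → B i i ≤ B j j)
    (hBoff : ∀ i j : Fin m, i < j → |B i j| ≤ B i i)
    (hB11 : 2 ≤ B 0 0)
    (C : ℝ) (hC : 1 ≤ C)
    (hCbig : ∃ y : Fin m → Fin n → ℝ,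
      (∀ p : Idx m, quadR A y p.1.1 p.1.2 = (bvec B p : ℝ)) ∧
      ∀ i : Fin m, ∀ t : Fin n, |y i t| < PP C B i) :
    (∃ x : Fin m → Fin n → ℝ, ∀ p : Idx m,
        quadR A x p.1.1 p.1.2 = (PP C B p.1.1 * PP C B p.1.2)⁻¹ * (bvec B p : ℝ)) ∧
    (∀ x : Fin m → Fin n → ℝ,
      (∀ p : Idx m,
        quadR A x p.1.1 p.1.2 = (PP C B p.1.1 * PP C B p.1.2)⁻¹ * (bvec B p : ℝ)) →
      Function.Surjective
        ⇑(fderiv ℝ (fun y : Fin m → Fin n → ℝ => fun p : Idx m =>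
            quadR A y p.1.1 p.1.2 - (PP C B p.1.1 * PP C B p.1.2)⁻¹ * (bvec B p : ℝ)) x)) ∧
    (∀ X : Matrix (Fin n) (Fin m) ℝ,
      Xᵀ * A.map ((↑) : ℤ → ℝ) * X =
        Matrix.of (fun i j : Fin m => (PP C B i * PP C B j)⁻¹ * ((B i j : ℤ) : ℝ)) →
      X.rank = m) := by
  have hP (i : Fin m) : PP C B i ≠ 0 := (PP_pos (zero_lt_one.trans_le hC) hBpd.diag_pos).ne'
  simpa only [quadR_eq_gramMatrix_apply, bvec, rescale, of_apply, map_apply, Fintype.card_fin] using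
    stmt16_general (hAs.map _) (hBs.map _) hBpd.isUnit hP <| hCbig.imp fun y hy p =>
      (quadR_eq_gramMatrix_apply A y p.1.1 p.1.2).symm.trans (hy.1 p)
end
end

section
/- Let P ≥ 1 and define S'(α) = Σ_{x_1,…,x_m ∈ ℤ^n, |x_i| ≤ P} e(Σ_{1≤i≤j≤m} α_{ij}·x_i^T A x_j) for α = (α_{ij})_{1≤i≤j≤m} ∈ ℝ^R. For any ε > 0 there is a constant K (depending only on A, m, n, ε) such that whenever 0 < max_{1≤i≤j≤m}|α_{ij}| < P^{−1}, one has |S'(α)| ≤ K·P^{mn+ε}·(P²·max_{1≤i≤j≤m}|α_{ij}|)^{−n/(2R)}. -/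
open scoped BigOperators
open MeasureTheory Matrix Filter

noncomputable section

/-!
Choose the pair `p` for which `|α p|` is largest and freeze all variables outside `p`. If
`p = (i, i)` is diagonal, Weyl differencing in `xᵢ` bounds the square of the inner sum; if
`p = (i, j)` with `i < j`, the Cauchy–Schwarz inequality does the same for the sum over `xᵢ` and
`xⱼ`. Either way one is left with linear sums `∑ e(α p * h ⬝ B y)` over `y`, one for each difference
`h`, where `B` is `A + Aᵀ` or `A`. As `B` is nonsingular, `h ↦ h B` is injective, so these sums add
up to at most the `n`-th power of `∑ min (M, 1 / ‖α p * k‖)` over `|k| ≪ P`, where `M ≪ P` and `‖·‖`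
is the distance to the nearest integer. Since `|α p| < 1 / P`, the points `α p * k` are
`|α p|`-spaced in an interval of bounded length, and the sum is `O(P ^ ε / |α p|)`. This gives the
exponent `-n / 2` when `P² max |α| ≥ 1`; when `P² max |α| < 1` the trivial bound suffices.
-/

lemma eR_eq_fourierChar (a : ℝ) : eR a = Real.fourierChar a := by
  rw [Real.fourierChar_apply, eR]
  push_cast
  ring_nf

lemma eR_add (a b : ℝ) : eR (a + b) = eR a * eR b := by
  simp only [eR_eq_fourierChar, AddChar.map_add_eq_mul, Circle.coe_mul]

lemma norm_eR (a : ℝ) : ‖eR a‖ = 1 := by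
  rw [eR_eq_fourierChar, Circle.norm_coe]

lemma conj_eR (a : ℝ) : (starRingEnd ℂ) (eR a) = eR (-a) := by
  rw [eR_eq_fourierChar, eR_eq_fourierChar, AddChar.map_neg_eq_inv, Circle.coe_inv_eq_conj]

lemma eR_intCast (a : ℤ) : eR a = 1 := by
  rw [eR, Complex.exp_eq_one_iff]
  exact ⟨a, by push_cast; ring⟩

lemma eR_nsmul (k : ℕ) (a : ℝ) : eR (k • a) = eR a ^ k := by
  simp only [eR_eq_fourierChar, AddChar.map_nsmul_eq_pow, Circle.coe_pow]

lemma eR_sum {ι : Type*} (s : Finset ι) (f : ι → ℝ) :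
    eR (∑ i ∈ s, f i) = ∏ i ∈ s, eR (f i) := by
  simp only [eR, ← Complex.exp_sum]
  push_cast
  rw [Finset.mul_sum]

lemma norm_sum_eR_le_card {ι : Type*} (s : Finset ι) (f : ι → ℝ) :
    ‖∑ i ∈ s, eR (f i)‖ ≤ s.card := by
  simpa [norm_eR] using norm_sum_le s fun i => eR (f i)

lemma norm_sum_eR_add_const {ι : Type*} (s : Finset ι) (f : ι → ℝ) (a : ℝ) :
    ‖∑ i ∈ s, eR (f i + a)‖ = ‖∑ i ∈ s, eR (f i)‖ := by
  simp only [eR_add, ← Finset.sum_mul, norm_mul, norm_eR, mul_one]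

lemma four_mul_abs_sub_round_le_norm_eR_sub_one (θ : ℝ) : 4 * |θ - round θ| ≤ ‖eR θ - 1‖ := by
  set t := θ - round θ
  have eR_t : eR θ = eR t := by
    rw [← sub_add_cancel θ (round θ : ℝ), eR_add, eR_intCast, mul_one]
  have norm_eq : ‖eR t - 1‖ = 2 * |Real.sin (Real.pi * t)| := by
    rw [eR_eq_fourierChar, Real.fourierChar_apply, mul_comm, Complex.norm_exp_I_mul_ofReal_sub_one,
      norm_mul, Real.norm_eq_abs, Real.norm_eq_abs, abs_two]
    ring_nf
  have jordan : 2 / Real.pi * |Real.pi * t| ≤ |Real.sin (Real.pi * t)| := by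
    refine Real.mul_abs_le_abs_sin ?_
    rw [abs_mul, abs_of_pos Real.pi_pos]
    nlinarith [Real.pi_pos, abs_sub_round θ]
  rw [abs_mul, abs_of_pos Real.pi_pos, ← mul_assoc, div_mul_cancel₀ _ Real.pi_ne_zero] at jordan
  rw [eR_t, norm_eq]
  linarith

lemma norm_sum_Icc_eR_mul_norm_sub_one_le (θ : ℝ) (u v : ℤ) :
    ‖∑ y ∈ Finset.Icc u v, eR (θ * y)‖ * ‖eR θ - 1‖ ≤ 2 := by
  have geometric : ∑ y ∈ Finset.Icc u v, eR (θ * y) =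
      eR (θ * u) * ∑ k ∈ Finset.range (v + 1 - u).toNat, eR θ ^ k := by
    rw [Int.Icc_eq_finset_map, Finset.sum_map, Finset.mul_sum]
    refine Finset.sum_congr rfl fun k _ => ?_
    rw [← eR_nsmul, ← eR_add]
    simp [mul_add, mul_comm]
  rw [← norm_mul, geometric, mul_assoc, geom_sum_mul, norm_mul, norm_eR, one_mul]
  calc ‖eR θ ^ (v + 1 - u).toNat - 1‖ ≤ ‖eR θ ^ (v + 1 - u).toNat‖ + ‖(1 : ℂ)‖ := norm_sub_le _ _
    _ = 2 := by rw [norm_pow, norm_eR, one_pow, norm_one, one_add_one_eq_two]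

/-- The harmonic mean of `M` and `1 / (2 * |t|)`. It stands in for `min M (1 / (2 * |t|))`, which it
dominates, because it takes the correct value `2 * M` at `t = 0`, where `1 / 0 = 0`. -/
def recipWeight (M t : ℝ) : ℝ := 2 * M / (1 + 2 * M * |t|)

lemma recipWeight_nonneg {M : ℝ} (hM : 0 ≤ M) (t : ℝ) : 0 ≤ recipWeight M t := by
  unfold recipWeight
  positivity

lemma recipWeight_le_of_abs_le {M s t : ℝ} (hM : 0 ≤ M) (hst : |s| ≤ |t|) :
    recipWeight M t ≤ recipWeight M s := by
  unfold recipWeight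
  gcongr

lemma recipWeight_le_inv {M t : ℝ} (hM : 0 ≤ M) (ht : 0 < t) : recipWeight M t ≤ t⁻¹ := by
  rw [recipWeight, abs_of_pos ht, inv_eq_one_div, div_le_div_iff₀ (by positivity) ht]
  linarith

lemma norm_sum_Icc_eR_le_recipWeight {M : ℝ} (hM : 0 ≤ M) (θ : ℝ) {u v : ℤ}
    (huv : ((Finset.Icc u v).card : ℝ) ≤ M) :
    ‖∑ y ∈ Finset.Icc u v, eR (θ * y)‖ ≤ recipWeight M (θ - round θ) := by
  set S := ‖∑ y ∈ Finset.Icc u v, eR (θ * y)‖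
  have le_M : S ≤ M := (norm_sum_eR_le_card _ _).trans huv
  have mul_dist_le : S * (4 * |θ - round θ|) ≤ 2 :=
    (mul_le_mul_of_nonneg_left (four_mul_abs_sub_round_le_norm_eR_sub_one θ) (norm_nonneg _)).trans
      (norm_sum_Icc_eR_mul_norm_sub_one_le θ u v)
  rw [recipWeight, le_div_iff₀ (by positivity)]
  nlinarith

lemma sum_range_recipWeight_le {M b : ℝ} (hM : 0 ≤ M) (hb : 0 < b) (D : ℕ) :
    ∑ k ∈ Finset.range (D + 1), recipWeight M (b * k) ≤ 2 * M + b⁻¹ * (1 + Real.log D) := by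
  have tail : ∑ k ∈ Finset.range D, recipWeight M (b * (k + 1 : ℕ)) ≤ b⁻¹ * (1 + Real.log D) :=
    calc ∑ k ∈ Finset.range D, recipWeight M (b * (k + 1 : ℕ))
        ≤ ∑ k ∈ Finset.range D, (b * (k + 1 : ℕ))⁻¹ :=
          Finset.sum_le_sum fun k _ => recipWeight_le_inv hM (by positivity)
      _ = b⁻¹ * harmonic D := by
          simp only [harmonic, mul_inv, Finset.mul_sum, Rat.cast_sum, Rat.cast_inv,
            Rat.cast_natCast]
      _ ≤ b⁻¹ * (1 + Real.log D) := by gcongr; exact harmonic_le_one_add_log D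
  have head : recipWeight M (b * (0 : ℕ)) = 2 * M := by simp [recipWeight]
  rw [Finset.sum_range_succ', head]
  linarith

lemma sum_Icc_recipWeight_le {M b : ℝ} (hM : 0 ≤ M) (hb : 0 < b) (D : ℕ) :
    ∑ d ∈ Finset.Icc (-(D : ℤ)) D, recipWeight M (b * d) ≤
      4 * M + 2 * b⁻¹ * (1 + Real.log D) := by
  have even : Function.Even fun d : ℤ => recipWeight M (b * d) := fun d => by simp [recipWeight]
  calc ∑ d ∈ Finset.Icc (-(D : ℤ)) D, recipWeight M (b * d)
      = 2 • ∑ k ∈ Finset.range (D + 1), recipWeight M (b * (k : ℤ)) -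
          recipWeight M (b * (0 : ℤ)) := Finset.sum_Icc_of_even_eq_range even D
    _ ≤ 2 • ∑ k ∈ Finset.range (D + 1), recipWeight M (b * (k : ℤ)) :=
        sub_le_self _ (recipWeight_nonneg hM _)
    _ = 2 * ∑ k ∈ Finset.range (D + 1), recipWeight M (b * k) := by
        simp only [Int.cast_natCast, nsmul_eq_mul, Nat.cast_ofNat]
    _ ≤ 2 * (2 * M + b⁻¹ * (1 + Real.log D)) := by gcongr; exact sum_range_recipWeight_le hM hb D
    _ = 4 * M + 2 * b⁻¹ * (1 + Real.log D) := by ring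

lemma sum_Icc_recipWeight_sub_le {M β : ℝ} (hM : 0 ≤ M) (hβ : β ≠ 0) (L : ℕ) (a : ℝ) :
    ∑ k ∈ Finset.Icc (-(L : ℤ)) L, recipWeight M (β * k - a) ≤
      4 * M + 4 * |β|⁻¹ * (1 + Real.log (2 * L : ℕ)) := by
  obtain ⟨k₀, hk₀, hmin⟩ := (Finset.Icc (-(L : ℤ)) L).exists_min_image (fun k : ℤ => |β * k - a|)
    ⟨0, by simp⟩
  -- The points `β * k` are `|β|`-spaced, so comparing with the one nearest to `a` costs a factor 2.
  have spacing : ∀ k ∈ Finset.Icc (-(L : ℤ)) L,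
      recipWeight M (β * k - a) ≤ recipWeight M (|β| / 2 * (k - k₀ : ℤ)) := by
    intro k hk
    refine recipWeight_le_of_abs_le hM ?_
    have triangle : |β| * |(k : ℝ) - k₀| ≤ |β * k - a| + |β * k₀ - a| := by
      rw [← abs_mul, show β * ((k : ℝ) - k₀) = (β * k - a) - (β * k₀ - a) by ring]
      exact abs_sub _ _
    rw [abs_mul, abs_div, abs_abs, abs_two]
    push_cast
    linarith [hmin k hk]
  have differences : (Finset.Icc (-(L : ℤ)) L).image (· - k₀) ⊆
      Finset.Icc (-((2 * L : ℕ) : ℤ)) (2 * L : ℕ) := by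
    intro d hd
    obtain ⟨k, hk, rfl⟩ := Finset.mem_image.mp hd
    rw [Finset.mem_Icc] at hk hk₀ ⊢
    omega
  calc ∑ k ∈ Finset.Icc (-(L : ℤ)) L, recipWeight M (β * k - a)
      ≤ ∑ k ∈ Finset.Icc (-(L : ℤ)) L, recipWeight M (|β| / 2 * (k - k₀ : ℤ)) :=
        Finset.sum_le_sum spacing
    _ = ∑ d ∈ (Finset.Icc (-(L : ℤ)) L).image (· - k₀), recipWeight M (|β| / 2 * d) := by
        rw [Finset.sum_image fun x _ y _ h => sub_left_injective h]
    _ ≤ ∑ d ∈ Finset.Icc (-((2 * L : ℕ) : ℤ)) (2 * L : ℕ), recipWeight M (|β| / 2 * d) :=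
        Finset.sum_le_sum_of_subset_of_nonneg differences fun _ _ _ => recipWeight_nonneg hM _
    _ ≤ 4 * M + 2 * (|β| / 2)⁻¹ * (1 + Real.log (2 * L : ℕ)) :=
        sum_Icc_recipWeight_le hM (by positivity) _
    _ = 4 * M + 4 * |β|⁻¹ * (1 + Real.log (2 * L : ℕ)) := by rw [inv_div]; ring

lemma round_mem_Icc_of_abs_le {x : ℝ} {Z : ℕ} (hx : |x| ≤ Z) :
    round x ∈ Finset.Icc (-(Z : ℤ)) Z := by
  have hx := abs_le.mp hx
  rw [round_eq, Finset.mem_Icc, Int.le_floor, ← Int.lt_add_one_iff, Int.floor_lt]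
  push_cast
  constructor <;> linarith

/-- The sum over `|k| ≤ L` of the weights of the distances from `β * k` to the nearest integer. A
Weyl sum in one variable is bounded by such a sum after differencing. -/
def recipSum (M β : ℝ) (L : ℕ) : ℝ :=
  ∑ k ∈ Finset.Icc (-(L : ℤ)) L, recipWeight M (β * k - round (β * k))

lemma recipSum_nonneg {M : ℝ} (hM : 0 ≤ M) (β : ℝ) (L : ℕ) : 0 ≤ recipSum M β L :=
  Finset.sum_nonneg fun _ _ => recipWeight_nonneg hM _

lemma recipSum_le {M β : ℝ} (hM : 0 ≤ M) (hβ : β ≠ 0) {L Z : ℕ} (hZ : |β| * L ≤ Z) :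
    recipSum M β L ≤ (2 * Z + 1) * (4 * M + 4 * |β|⁻¹ * (1 + Real.log (2 * L : ℕ))) := by
  have round_mem : ∀ k ∈ Finset.Icc (-(L : ℤ)) L,
      round (β * k) ∈ Finset.Icc (-(Z : ℤ)) Z := by
    intro k hk
    have abs_k : |(k : ℝ)| ≤ L := by exact_mod_cast abs_le.mpr (Finset.mem_Icc.mp hk)
    refine round_mem_Icc_of_abs_le (le_trans ?_ hZ)
    rw [abs_mul]
    gcongr
  calc recipSum M β L
      ≤ ∑ k ∈ Finset.Icc (-(L : ℤ)) L, ∑ a ∈ Finset.Icc (-(Z : ℤ)) Z,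
          recipWeight M (β * k - a) := by
        refine Finset.sum_le_sum fun k hk => ?_
        exact Finset.single_le_sum (f := fun a : ℤ => recipWeight M (β * k - a))
          (fun _ _ => recipWeight_nonneg hM _) (round_mem k hk)
    _ = ∑ a ∈ Finset.Icc (-(Z : ℤ)) Z, ∑ k ∈ Finset.Icc (-(L : ℤ)) L,
          recipWeight M (β * k - a) := Finset.sum_comm
    _ ≤ ∑ a ∈ Finset.Icc (-(Z : ℤ)) Z, (4 * M + 4 * |β|⁻¹ * (1 + Real.log (2 * L : ℕ))) :=
        Finset.sum_le_sum fun a _ => sum_Icc_recipWeight_sub_le hM hβ L a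
    _ = (2 * Z + 1) * (4 * M + 4 * |β|⁻¹ * (1 + Real.log (2 * L : ℕ))) := by
        rw [Finset.sum_const, nsmul_eq_mul, Int.card_Icc,
          show ((Z : ℤ) + 1 - -Z).toNat = 2 * Z + 1 by omega]
        push_cast
        rfl

lemma exists_recipSum_le (c : ℕ) {δ : ℝ} (hδ : 0 < δ) :
    ∃ K : ℝ, 0 < K ∧ ∀ P : ℝ, 1 ≤ P → ∀ N : ℕ, (N : ℝ) ≤ P → ∀ β : ℝ, β ≠ 0 → |β| < P⁻¹ →
      recipSum (2 * N + 1) β (c * (2 * N)) ≤ K * (P ^ δ * |β|⁻¹) := by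
  refine ⟨(2 * (2 * c : ℕ) + 1) * (16 + 4 * ((4 * c : ℝ) ^ δ / δ)), by positivity, ?_⟩
  intro P hP N hN β hβ hβP
  have hP0 : 0 < P := by linarith
  have one_le_rpow : 1 ≤ P ^ δ := Real.one_le_rpow hP hδ.le
  have range_le : |β| * (c * (2 * N) : ℕ) ≤ (2 * c : ℕ) := by
    push_cast
    calc |β| * (c * (2 * N)) ≤ P⁻¹ * (c * (2 * P)) := by gcongr
      _ = 2 * c := by field_simp
  have side_le : (2 * N + 1 : ℝ) ≤ 3 * (P ^ δ * |β|⁻¹) :=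
    calc (2 * N + 1 : ℝ) ≤ 3 * (1 * P) := by linarith
      _ ≤ 3 * (P ^ δ * |β|⁻¹) := by
        gcongr
        exact (le_inv_comm₀ hP0 (abs_pos.mpr hβ)).mpr hβP.le
  have log_le : Real.log (2 * (c * (2 * N)) : ℕ) ≤ (4 * c : ℝ) ^ δ / δ * P ^ δ :=
    calc Real.log (2 * (c * (2 * N)) : ℕ) ≤ ((2 * (c * (2 * N)) : ℕ) : ℝ) ^ δ / δ :=
          Real.log_le_rpow_div (Nat.cast_nonneg _) hδ
      _ = (4 * c * N : ℝ) ^ δ / δ := by push_cast; ring_nf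
      _ ≤ (4 * c * P : ℝ) ^ δ / δ := by gcongr
      _ = (4 * c : ℝ) ^ δ / δ * P ^ δ := by
          rw [Real.mul_rpow (by positivity) hP0.le, mul_div_right_comm]
  calc recipSum (2 * N + 1) β (c * (2 * N))
      ≤ (2 * (2 * c : ℕ) + 1) *
          (4 * (2 * N + 1) + 4 * |β|⁻¹ * (1 + Real.log (2 * (c * (2 * N)) : ℕ))) :=
        recipSum_le (by positivity) hβ range_le
    _ ≤ (2 * (2 * c : ℕ) + 1) * (4 * (3 * (P ^ δ * |β|⁻¹)) +
          4 * |β|⁻¹ * (P ^ δ + (4 * c : ℝ) ^ δ / δ * P ^ δ)) := by gcongr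
    _ = (2 * (2 * c : ℕ) + 1) * (16 + 4 * ((4 * c : ℝ) ^ δ / δ)) * (P ^ δ * |β|⁻¹) := by ring

lemma exists_sqrt_recipSum_pow_le (c n : ℕ) {ε : ℝ} (hε : 0 < ε) :
    ∃ K : ℝ, 0 < K ∧ ∀ P : ℝ, 1 ≤ P → ∀ N : ℕ, (N : ℝ) ≤ P → ∀ β : ℝ, β ≠ 0 → |β| < P⁻¹ →
      √(recipSum (2 * N + 1) β (c * (2 * N)) ^ n) ≤ K * (P ^ ε * |β| ^ (-(n : ℝ) / 2)) := by
  set δ := 2 * ε / (n + 1) with δ_def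
  have loss_le : δ * (n / 2) ≤ ε := by
    rw [δ_def, div_mul_eq_mul_div, div_le_iff₀ (by positivity)]
    linarith
  obtain ⟨K, K_pos, hK⟩ := exists_recipSum_le c (show 0 < δ by positivity)
  refine ⟨K ^ ((n : ℝ) / 2), by positivity, fun P hP N hN β hβ hβP => ?_⟩
  have P_nonneg : 0 ≤ P := by linarith
  calc √(recipSum (2 * N + 1) β (c * (2 * N)) ^ n)
      ≤ √((K * (P ^ δ * |β|⁻¹)) ^ n) := by
        gcongr
        · exact recipSum_nonneg (by positivity) _ _
        · exact hK P hP N hN β hβ hβP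
    _ = (K * (P ^ δ * |β|⁻¹)) ^ ((n : ℝ) / 2) := by
        rw [Real.sqrt_eq_rpow, ← Real.rpow_natCast, ← Real.rpow_mul (by positivity), mul_one_div]
    _ = K ^ ((n : ℝ) / 2) * (P ^ (δ * (n / 2)) * |β| ^ (-(n : ℝ) / 2)) := by
        rw [Real.mul_rpow K_pos.le (by positivity), Real.mul_rpow (by positivity) (by positivity),
          ← Real.rpow_mul P_nonneg, Real.inv_rpow (abs_nonneg β), ← Real.rpow_neg (abs_nonneg β),
          neg_div]
    _ ≤ K ^ ((n : ℝ) / 2) * (P ^ ε * |β| ^ (-(n : ℝ) / 2)) := by gcongr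

section Differencing

variable {G : Type*} [AddCommGroup G] {B H : Finset G}

lemma ofReal_norm_sq_sum_eR {ι : Type*} (s : Finset ι) (f : ι → ℝ) :
    ((‖∑ y ∈ s, eR (f y)‖ ^ 2 : ℝ) : ℂ) = ∑ y ∈ s, ∑ z ∈ s, eR (f z - f y) := by
  push_cast
  rw [← Complex.conj_mul', map_sum, Finset.sum_mul_sum]
  refine Finset.sum_congr rfl fun y _ => Finset.sum_congr rfl fun z _ => ?_
  rw [conj_eR, ← eR_add, neg_add_eq_sub]

lemma ofReal_norm_sq_sum_eR_eq_sum_shift [DecidableEq G] (hH : ∀ y ∈ B, ∀ z ∈ B, z - y ∈ H)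
    (ψ : G → ℝ) :
    ((‖∑ y ∈ B, eR (ψ y)‖ ^ 2 : ℝ) : ℂ) =
      ∑ h ∈ H, ∑ y ∈ B with y + h ∈ B, eR (ψ (y + h) - ψ y) := by
  simp only [ofReal_norm_sq_sum_eR, Finset.sum_filter]
  rw [Finset.sum_comm (s := H)]
  refine Finset.sum_congr rfl fun y hy => ?_
  rw [← Finset.sum_filter]
  refine Finset.sum_nbij' (· - y) (y + ·) ?_ ?_ ?_ ?_ ?_
  · intro z hz
    simpa [hz] using hH y hy z hz
  · intro h hh
    exact (Finset.mem_filter.mp hh).2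
  all_goals simp

lemma norm_sq_sum_eR_le_of_sub_eq [DecidableEq G] (hH : ∀ y ∈ B, ∀ z ∈ B, z - y ∈ H)
    {ψ : G → ℝ} {b : G → G → ℝ} {κ : G → ℝ} (hψ : ∀ y h, ψ (y + h) - ψ y = b h y + κ h) :
    ‖∑ y ∈ B, eR (ψ y)‖ ^ 2 ≤ ∑ h ∈ H, ‖∑ y ∈ B with y + h ∈ B, eR (b h y)‖ :=
  calc ‖∑ y ∈ B, eR (ψ y)‖ ^ 2
      = ‖∑ h ∈ H, ∑ y ∈ B with y + h ∈ B, eR (b h y + κ h)‖ := by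
        simp only [← hψ]
        rw [← ofReal_norm_sq_sum_eR_eq_sum_shift hH, Complex.norm_of_nonneg (sq_nonneg _)]
    _ ≤ ∑ h ∈ H, ‖∑ y ∈ B with y + h ∈ B, eR (b h y + κ h)‖ := norm_sum_le _ _
    _ = ∑ h ∈ H, ‖∑ y ∈ B with y + h ∈ B, eR (b h y)‖ := by simp only [norm_sum_eR_add_const]

lemma sum_norm_sq_sum_eR_le (hH : ∀ y ∈ B, ∀ z ∈ B, z - y ∈ H) {X : Type*} (C : Finset X)
    {b : G → X → ℝ} (hb : ∀ y h z, b (y + h) z = b y z + b h z) (f : G → ℝ) (g : X → ℝ) :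
    ∑ z ∈ C, ‖∑ y ∈ B, eR (b y z + f y + g z)‖ ^ 2 ≤
      B.card * ∑ h ∈ H, ‖∑ z ∈ C, eR (b h z)‖ := by
  classical
  have expand : ((∑ z ∈ C, ‖∑ y ∈ B, eR (b y z + f y + g z)‖ ^ 2 : ℝ) : ℂ) =
      ∑ h ∈ H, ∑ y ∈ B with y + h ∈ B, ∑ z ∈ C, eR (b h z + (f (y + h) - f y)) := by
    have phase_sub : ∀ z y h, b (y + h) z + f (y + h) + g z - (b y z + f y + g z) =
        b h z + (f (y + h) - f y) := fun z y h => by rw [hb]; ring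
    simp only [Complex.ofReal_sum, ofReal_norm_sq_sum_eR_eq_sum_shift hH, phase_sub]
    rw [Finset.sum_comm]
    exact Finset.sum_congr rfl fun h _ => Finset.sum_comm
  have norm_expand := congrArg norm expand
  rw [Complex.norm_of_nonneg (Finset.sum_nonneg fun _ _ => sq_nonneg _)] at norm_expand
  rw [norm_expand, Finset.mul_sum]
  refine (norm_sum_le _ _).trans (Finset.sum_le_sum fun h _ => ?_)
  calc ‖∑ y ∈ B with y + h ∈ B, ∑ z ∈ C, eR (b h z + (f (y + h) - f y))‖
      ≤ ∑ y ∈ B with y + h ∈ B, ‖∑ z ∈ C, eR (b h z + (f (y + h) - f y))‖ := norm_sum_le _ _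
    _ = (B.filter (· + h ∈ B)).card * ‖∑ z ∈ C, eR (b h z)‖ := by
        simp only [norm_sum_eR_add_const, Finset.sum_const, nsmul_eq_mul]
    _ ≤ B.card * ‖∑ z ∈ C, eR (b h z)‖ := by gcongr; exact Finset.filter_subset _ _

lemma norm_sq_sum_sum_eR_le (hH : ∀ y ∈ B, ∀ z ∈ B, z - y ∈ H) {X : Type*} (C : Finset X)
    {b : G → X → ℝ} (hb : ∀ y h z, b (y + h) z = b y z + b h z) (f : G → ℝ) (g : X → ℝ) :
    ‖∑ z ∈ C, ∑ y ∈ B, eR (b y z + f y + g z)‖ ^ 2 ≤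
      C.card * (B.card * ∑ h ∈ H, ‖∑ z ∈ C, eR (b h z)‖) :=
  calc ‖∑ z ∈ C, ∑ y ∈ B, eR (b y z + f y + g z)‖ ^ 2
      ≤ (∑ z ∈ C, ‖∑ y ∈ B, eR (b y z + f y + g z)‖) ^ 2 := by gcongr; exact norm_sum_le _ _
    _ ≤ C.card * ∑ z ∈ C, ‖∑ y ∈ B, eR (b y z + f y + g z)‖ ^ 2 := sq_sum_le_card_mul_sum_sq
    _ ≤ C.card * (B.card * ∑ h ∈ H, ‖∑ z ∈ C, eR (b h z)‖) := by
        gcongr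
        exact sum_norm_sq_sum_eR_le hH C hb f g

end Differencing

section Cube

variable {ι : Type*} [Fintype ι] [DecidableEq ι]

variable (ι) in
/-- The integer vectors of max norm at most `N`. -/
def intCube (N : ℕ) : Finset (ι → ℤ) := Fintype.piFinset fun _ => Finset.Icc (-(N : ℤ)) N

lemma mem_intCube {N : ℕ} {x : ι → ℤ} : x ∈ intCube ι N ↔ ∀ i, |x i| ≤ N := by
  simp only [intCube, Fintype.mem_piFinset, Finset.mem_Icc, abs_le]

lemma intCube_nonempty (N : ℕ) : (intCube ι N).Nonempty := ⟨0, by simp [mem_intCube]⟩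

lemma card_Icc_neg_natCast (N : ℕ) : (Finset.Icc (-(N : ℤ)) N).card = 2 * N + 1 := by
  rw [Int.card_Icc]
  omega

lemma card_intCube (N : ℕ) : ((intCube ι N).card : ℝ) = (2 * N + 1 : ℝ) ^ Fintype.card ι := by
  simp only [intCube, Fintype.card_piFinset, card_Icc_neg_natCast, Finset.prod_const,
    Finset.card_univ]
  push_cast
  rfl

lemma sub_mem_intCube (N : ℕ) :
    ∀ y ∈ intCube ι N, ∀ z ∈ intCube ι N, z - y ∈ intCube ι (2 * N) := by
  intro y hy z hz
  rw [mem_intCube] at hy hz ⊢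
  intro i
  have := abs_sub (z i) (y i)
  have := hy i
  have := hz i
  rw [Pi.sub_apply]
  push_cast
  linarith

lemma filter_add_mem_intCube (N : ℕ) (h : ι → ℤ) :
    (intCube ι N).filter (· + h ∈ intCube ι N) = Fintype.piFinset fun i =>
      Finset.Icc (max (-(N : ℤ)) (-N - h i)) (min (N : ℤ) (N - h i)) := by
  ext y
  simp only [intCube, Finset.mem_filter, Fintype.mem_piFinset, Finset.mem_Icc, Pi.add_apply,
    ← forall_and]
  refine forall_congr' fun i => ?_
  omega

lemma norm_sum_piFinset_Icc_eR_le {M : ℝ} (hM : 0 ≤ M) (θ : ι → ℝ) {u v : ι → ℤ}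
    (huv : ∀ i, ((Finset.Icc (u i) (v i)).card : ℝ) ≤ M) :
    ‖∑ y ∈ Fintype.piFinset fun i => Finset.Icc (u i) (v i), eR (∑ i, θ i * y i)‖ ≤
      ∏ i, recipWeight M (θ i - round (θ i)) := by
  simp only [eR_sum]
  rw [← Finset.prod_univ_sum (fun i => Finset.Icc (u i) (v i)) fun i k => eR (θ i * k), norm_prod]
  exact Finset.prod_le_prod (fun _ _ => norm_nonneg _)
    fun i _ => norm_sum_Icc_eR_le_recipWeight hM (θ i) (huv i)

lemma vecMul_mem_intCube {A : Matrix ι ι ℤ} {c N : ℕ} (hc : ∀ t, ∑ s, |A s t| ≤ c) {h : ι → ℤ}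
    (hh : h ∈ intCube ι N) : h ᵥ* A ∈ intCube ι (c * N) := by
  rw [mem_intCube] at hh ⊢
  intro t
  calc |(h ᵥ* A) t| ≤ ∑ s, |h s * A s t| := Finset.abs_sum_le_sum_abs _ _
    _ ≤ ∑ s, (N : ℤ) * |A s t| := by
        refine Finset.sum_le_sum fun s _ => ?_
        rw [abs_mul]
        exact mul_le_mul_of_nonneg_right (hh s) (abs_nonneg _)
    _ ≤ N * c := by
        rw [← Finset.mul_sum]
        exact mul_le_mul_of_nonneg_left (hc t) (Nat.cast_nonneg N)
    _ = (c * N : ℕ) := by push_cast; ring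

lemma vecMul_injective_of_det_ne_zero {A : Matrix ι ι ℤ} (hA : A.det ≠ 0) :
    Function.Injective fun h : ι → ℤ => h ᵥ* A := by
  intro x y hxy
  refine sub_eq_zero.mp (eq_zero_of_vecMul_eq_zero hA ?_)
  rw [sub_vecMul]
  exact sub_eq_zero.mpr hxy

lemma sum_norm_sum_eR_dotProduct_le {A : Matrix ι ι ℤ} (hA : A.det ≠ 0) {c : ℕ}
    (hc : ∀ t, ∑ s, |A s t| ≤ c) (N : ℕ) {M : ℝ} (hM : 0 ≤ M) (β : ℝ) {u v : (ι → ℤ) → ι → ℤ}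
    (huv : ∀ h i, ((Finset.Icc (u h i) (v h i)).card : ℝ) ≤ M) :
    ∑ h ∈ intCube ι N, ‖∑ y ∈ Fintype.piFinset fun i => Finset.Icc (u h i) (v h i),
        eR (β * (h ⬝ᵥ A *ᵥ y : ℤ))‖ ≤ recipSum M β (c * N) ^ Fintype.card ι := by
  set w : ℤ → ℝ := fun k => recipWeight M (β * k - round (β * k))
  have linear : ∀ h y : ι → ℤ, β * (h ⬝ᵥ A *ᵥ y : ℤ) = ∑ i, β * ((h ᵥ* A) i : ℤ) * y i := by
    intro h y
    rw [dotProduct_mulVec, dotProduct]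
    push_cast
    simp only [Finset.mul_sum, mul_assoc]
  calc ∑ h ∈ intCube ι N, ‖∑ y ∈ Fintype.piFinset fun i => Finset.Icc (u h i) (v h i),
        eR (β * (h ⬝ᵥ A *ᵥ y : ℤ))‖
      ≤ ∑ h ∈ intCube ι N, ∏ i, w ((h ᵥ* A) i) := by
        refine Finset.sum_le_sum fun h _ => ?_
        simp only [linear]
        exact norm_sum_piFinset_Icc_eR_le hM _ (huv h)
    _ = ∑ k ∈ (intCube ι N).image (· ᵥ* A), ∏ i, w (k i) := by
        rw [Finset.sum_image (vecMul_injective_of_det_ne_zero hA).injOn]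
    _ ≤ ∑ k ∈ intCube ι (c * N), ∏ i, w (k i) :=
        Finset.sum_le_sum_of_subset_of_nonneg
          (Finset.image_subset_iff.mpr fun _ hh => vecMul_mem_intCube hc hh)
          fun _ _ _ => Finset.prod_nonneg fun _ _ => recipWeight_nonneg hM _
    _ = recipSum M β (c * N) ^ Fintype.card ι := by
        rw [recipSum, intCube, ← Finset.prod_univ_sum (fun _ => _) fun _ => w, Finset.prod_const,
          Finset.card_univ]

lemma norm_sq_sum_intCube_eR_le_of_sub_eq {A : Matrix ι ι ℤ} (hA : A.det ≠ 0) {c : ℕ}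
    (hc : ∀ t, ∑ s, |A s t| ≤ c) (N : ℕ) {β : ℝ} {ψ κ : (ι → ℤ) → ℝ}
    (hψ : ∀ y h, ψ (y + h) - ψ y = β * (h ⬝ᵥ A *ᵥ y : ℤ) + κ h) :
    ‖∑ y ∈ intCube ι N, eR (ψ y)‖ ^ 2 ≤
      recipSum (2 * N + 1) β (c * (2 * N)) ^ Fintype.card ι := by
  refine (norm_sq_sum_eR_le_of_sub_eq (sub_mem_intCube N) hψ).trans ?_
  simp only [filter_add_mem_intCube]
  refine sum_norm_sum_eR_dotProduct_le hA hc _ (by positivity) β fun h i => ?_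
  rw [← Nat.cast_ofNat, ← Nat.cast_mul, ← Nat.cast_add_one, ← card_Icc_neg_natCast]
  exact_mod_cast Finset.card_le_card (Finset.Icc_subset_Icc (le_max_left _ _) (min_le_left _ _))

lemma norm_sq_sum_sum_intCube_eR_le {A : Matrix ι ι ℤ} (hA : A.det ≠ 0) {c : ℕ}
    (hc : ∀ t, ∑ s, |A s t| ≤ c) (N : ℕ) (β : ℝ) (f g : (ι → ℤ) → ℝ) :
    ‖∑ z ∈ intCube ι N, ∑ y ∈ intCube ι N, eR (β * (y ⬝ᵥ A *ᵥ z : ℤ) + f y + g z)‖ ^ 2 ≤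
      ((intCube ι N).card : ℝ) ^ 2 *
        recipSum (2 * N + 1) β (c * (2 * N)) ^ Fintype.card ι := by
  have additive : ∀ y h z : ι → ℤ, β * ((y + h) ⬝ᵥ A *ᵥ z : ℤ) =
      β * (y ⬝ᵥ A *ᵥ z : ℤ) + β * (h ⬝ᵥ A *ᵥ z : ℤ) := by
    intro y h z
    rw [add_dotProduct, Int.cast_add, mul_add]
  refine (norm_sq_sum_sum_eR_le (sub_mem_intCube N) (intCube ι N) additive f g).trans ?_
  rw [sq, mul_assoc]
  gcongr
  refine sum_norm_sum_eR_dotProduct_le hA hc (2 * N) (by positivity) β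
    (u := fun _ _ => -(N : ℤ)) (v := fun _ _ => N) fun _ _ => ?_
  rw [card_Icc_neg_natCast]
  push_cast
  rfl

end Cube

section Averaging

variable {κ V : Type*} [Fintype κ] [DecidableEq κ] {B : Finset V}

lemma card_mul_sum_piFinset_const (B : Finset V) (i : κ) (F : (κ → V) → ℂ) :
    B.card * ∑ x ∈ Fintype.piFinset fun _ : κ => B, F x =
      ∑ x ∈ Fintype.piFinset fun _ : κ => B, ∑ y ∈ B, F (Function.update x i y) := by
  have swap_mem : ∀ q ∈ (Fintype.piFinset fun _ : κ => B) ×ˢ B,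
      (Function.update q.1 i q.2, q.1 i) ∈ (Fintype.piFinset fun _ : κ => B) ×ˢ B := by
    intro q hq
    simp only [Finset.mem_product, Fintype.mem_piFinset] at hq ⊢
    refine ⟨fun j => ?_, hq.1 i⟩
    rcases eq_or_ne j i with rfl | hj
    · simpa using hq.2
    · simpa [hj] using hq.1 j
  calc B.card * ∑ x ∈ Fintype.piFinset fun _ : κ => B, F x
      = ∑ q ∈ (Fintype.piFinset fun _ : κ => B) ×ˢ B, F q.1 := by
        simp [Finset.sum_product, Finset.mul_sum]
    _ = ∑ q ∈ (Fintype.piFinset fun _ : κ => B) ×ˢ B, F (Function.update q.1 i q.2) :=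
        Finset.sum_nbij' (fun q => (Function.update q.1 i q.2, q.1 i))
          (fun q => (Function.update q.1 i q.2, q.1 i)) swap_mem swap_mem
          (by simp) (by simp) (by simp)
    _ = ∑ x ∈ Fintype.piFinset fun _ : κ => B, ∑ y ∈ B, F (Function.update x i y) :=
        Finset.sum_product _ _ _

lemma norm_sum_piFinset_le_of_update (hB : B.Nonempty) (i : κ) {F : (κ → V) → ℂ} {T : ℝ}
    (hT : ∀ x, ‖∑ y ∈ B, F (Function.update x i y)‖ ≤ T) :
    ‖∑ x ∈ Fintype.piFinset fun _ : κ => B, F x‖ ≤ (B.card : ℝ) ^ (Fintype.card κ - 1) * T := by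
  have card_pos : (0 : ℝ) < B.card := by exact_mod_cast hB.card_pos
  refine le_of_mul_le_mul_left ?_ card_pos
  calc B.card * ‖∑ x ∈ Fintype.piFinset fun _ : κ => B, F x‖
      = ‖∑ x ∈ Fintype.piFinset fun _ : κ => B, ∑ y ∈ B, F (Function.update x i y)‖ := by
        rw [← card_mul_sum_piFinset_const, norm_mul, Complex.norm_natCast]
    _ ≤ ∑ _x ∈ Fintype.piFinset fun _ : κ => B, T :=
        (norm_sum_le _ _).trans (Finset.sum_le_sum fun _ _ => hT _)
    _ = (B.card : ℝ) ^ Fintype.card κ * T := by simp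
    _ = B.card * ((B.card : ℝ) ^ (Fintype.card κ - 1) * T) := by
        rw [← mul_assoc, mul_pow_sub_one (Fintype.card_pos_iff.mpr ⟨i⟩).ne']

lemma norm_sum_piFinset_le_of_update_update (hB : B.Nonempty) (i j : κ) {F : (κ → V) → ℂ} {T : ℝ}
    (hT : ∀ x, ‖∑ z ∈ B, ∑ y ∈ B, F (Function.update (Function.update x j z) i y)‖ ≤ B.card * T) :
    ‖∑ x ∈ Fintype.piFinset fun _ : κ => B, F x‖ ≤ (B.card : ℝ) ^ (Fintype.card κ - 1) * T := by
  have card_pos : (0 : ℝ) < B.card := by exact_mod_cast hB.card_pos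
  refine le_of_mul_le_mul_left ?_ card_pos
  have averaged := norm_sum_piFinset_le_of_update hB j
    (F := fun x => ∑ y ∈ B, F (Function.update x i y)) hT
  rw [← card_mul_sum_piFinset_const, norm_mul, Complex.norm_natCast] at averaged
  rwa [mul_left_comm]

end Averaging

section PhaseForm

variable {m n : ℕ} (A : Matrix (Fin n) (Fin n) ℤ) (α : Idx m → ℝ)

/-- The bilinear form `∑ α_ij * xᵢᵀ A yⱼ` over `i ≤ j`. Its diagonal is the phase of the exponential
sum; separating the two arguments lets the phase be differenced by bilinearity. -/
def phaseForm (x y : Fin m → Fin n → ℤ) : ℝ := ∑ p : Idx m, α p * (x p.1.1 ⬝ᵥ A *ᵥ y p.1.2 : ℤ)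

/-- The exponential sum over all `m`-tuples of integer vectors of max norm at most `N`. -/
def phaseSum (N : ℕ) : ℂ :=
  ∑ x ∈ Fintype.piFinset fun _ : Fin m => intCube (Fin n) N, eR (phaseForm A α x x)

lemma phaseForm_add_left (x x' y : Fin m → Fin n → ℤ) :
    phaseForm A α (x + x') y = phaseForm A α x y + phaseForm A α x' y := by
  simp only [phaseForm, Pi.add_apply, add_dotProduct, Int.cast_add, mul_add, Finset.sum_add_distrib]

lemma phaseForm_add_right (x y y' : Fin m → Fin n → ℤ) :
    phaseForm A α x (y + y') = phaseForm A α x y + phaseForm A α x y' := by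
  simp only [phaseForm, Pi.add_apply, mulVec_add, dotProduct_add, Int.cast_add, mul_add,
    Finset.sum_add_distrib]

lemma phaseForm_self (x : Fin m → Fin n → ℤ) :
    phaseForm A α x x = ∑ p : Idx m, α p * (quadZ A x p.1.1 p.1.2 : ℝ) := by
  simp only [phaseForm, quadZ, dotProduct, mulVec, Finset.mul_sum, mul_assoc]

lemma phaseForm_single_single (p : Idx m) (y z : Fin n → ℤ) :
    phaseForm A α (Pi.single p.1.1 y) (Pi.single p.1.2 z) = α p * (y ⬝ᵥ A *ᵥ z : ℤ) := by
  rw [phaseForm, Finset.sum_eq_single p]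
  · simp only [Pi.single_eq_same]
  · intro q _ hq
    rcases ne_or_eq q.1.1 p.1.1 with fst_ne | fst_eq
    · simp [fst_ne]
    · have snd_ne : q.1.2 ≠ p.1.2 := fun snd_eq => hq (Subtype.ext (Prod.ext fst_eq snd_eq))
      simp [snd_ne]
  · exact fun hp => absurd (Finset.mem_univ p) hp

lemma phaseForm_single_single_of_lt {i j : Fin m} (hij : i < j) (y z : Fin n → ℤ) :
    phaseForm A α (Pi.single j z) (Pi.single i y) = 0 := by
  refine Finset.sum_eq_zero fun q _ => ?_
  rcases ne_or_eq q.1.1 j with fst_ne | fst_eq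
  · simp [fst_ne]
  · have snd_ne : q.1.2 ≠ i := (hij.trans_le (fst_eq ▸ q.2)).ne'
    simp [snd_ne]

lemma update_eq_update_zero_add_single {κ V : Type*} [DecidableEq κ] [AddZeroClass V] (x : κ → V)
    (i : κ) (y : V) : Function.update x i y = Function.update x i 0 + Pi.single i y := by
  ext j
  rcases eq_or_ne j i with rfl | hj
  · simp
  · simp [hj]

lemma exists_phaseForm_update_sub_eq {p : Idx m} (hp : p.1.1 = p.1.2) (x : Fin m → Fin n → ℤ) :
    ∃ κ : (Fin n → ℤ) → ℝ, ∀ y h,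
      phaseForm A α (Function.update x p.1.1 (y + h)) (Function.update x p.1.1 (y + h)) -
          phaseForm A α (Function.update x p.1.1 y) (Function.update x p.1.1 y) =
        α p * (h ⬝ᵥ (A + Aᵀ) *ᵥ y : ℤ) + κ h := by
  set u := Function.update x p.1.1 0
  refine ⟨fun h => phaseForm A α u (Pi.single p.1.1 h) + phaseForm A α (Pi.single p.1.1 h) u +
    phaseForm A α (Pi.single p.1.1 h) (Pi.single p.1.1 h), fun y h => ?_⟩
  have cross : ∀ v w : Fin n → ℤ, phaseForm A α (Pi.single p.1.1 v) (Pi.single p.1.1 w) =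
      α p * (v ⬝ᵥ A *ᵥ w : ℤ) := fun v w => by
    rw [← phaseForm_single_single A α p v w, ← hp]
  have symmetrize : h ⬝ᵥ (A + Aᵀ) *ᵥ y = h ⬝ᵥ A *ᵥ y + y ⬝ᵥ A *ᵥ h := by
    rw [add_mulVec, dotProduct_add, mulVec_transpose, dotProduct_comm h (y ᵥ* A),
      ← dotProduct_mulVec]
  rw [update_eq_update_zero_add_single x _ (y + h), update_eq_update_zero_add_single x _ y,
    Pi.single_add, symmetrize]
  simp only [phaseForm_add_left, phaseForm_add_right, cross, Int.cast_add]
  ring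

lemma exists_phaseForm_update_update_eq {p : Idx m} (hp : p.1.1 < p.1.2) (x : Fin m → Fin n → ℤ) :
    ∃ f g : (Fin n → ℤ) → ℝ, ∀ y z,
      phaseForm A α (Function.update (Function.update x p.1.2 z) p.1.1 y)
          (Function.update (Function.update x p.1.2 z) p.1.1 y) =
        α p * (y ⬝ᵥ A *ᵥ z : ℤ) + f y + g z := by
  set u := Function.update (Function.update x p.1.1 0) p.1.2 0
  refine ⟨fun y => phaseForm A α u (Pi.single p.1.1 y) + phaseForm A α (Pi.single p.1.1 y) u +
      phaseForm A α (Pi.single p.1.1 y) (Pi.single p.1.1 y),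
    fun z => phaseForm A α (u + Pi.single p.1.2 z) (u + Pi.single p.1.2 z), fun y z => ?_⟩
  rw [update_eq_update_zero_add_single _ p.1.1 y, Function.update_comm hp.ne',
    update_eq_update_zero_add_single _ p.1.2 z]
  simp only [phaseForm_add_left, phaseForm_add_right, phaseForm_single_single,
    phaseForm_single_single_of_lt A α hp]
  ring

end PhaseForm

section WeylBound

variable {m n : ℕ} {A : Matrix (Fin n) (Fin n) ℤ}

lemma norm_phaseSum_le_card_pow (A : Matrix (Fin n) (Fin n) ℤ) (α : Idx m → ℝ) (N : ℕ) :
    ‖phaseSum A α N‖ ≤ ((intCube (Fin n) N).card : ℝ) ^ m := by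
  refine (norm_sum_eR_le_card _ _).trans_eq ?_
  simp

lemma norm_phaseSum_le_of_eq (hA : (A + Aᵀ).det ≠ 0) {c : ℕ} (hc : ∀ t, ∑ s, |(A + Aᵀ) s t| ≤ c)
    (α : Idx m → ℝ) {p : Idx m} (hp : p.1.1 = p.1.2) (N : ℕ) :
    ‖phaseSum A α N‖ ≤ ((intCube (Fin n) N).card : ℝ) ^ (m - 1) *
      √(recipSum (2 * N + 1) (α p) (c * (2 * N)) ^ n) := by
  have slice : ∀ x, ‖∑ y ∈ intCube (Fin n) N, eR (phaseForm A α (Function.update x p.1.1 y)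
      (Function.update x p.1.1 y))‖ ≤ √(recipSum (2 * N + 1) (α p) (c * (2 * N)) ^ n) := by
    intro x
    obtain ⟨κ, hκ⟩ := exists_phaseForm_update_sub_eq A α hp x
    refine Real.le_sqrt_of_sq_le ?_
    simpa only [Fintype.card_fin] using norm_sq_sum_intCube_eR_le_of_sub_eq hA hc N hκ
  simpa only [phaseSum, Fintype.card_fin] using norm_sum_piFinset_le_of_update (intCube_nonempty N)
    p.1.1 (F := fun x => eR (phaseForm A α x x)) slice

lemma norm_phaseSum_le_of_lt (hA : A.det ≠ 0) {c : ℕ} (hc : ∀ t, ∑ s, |A s t| ≤ c)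
    (α : Idx m → ℝ) {p : Idx m} (hp : p.1.1 < p.1.2) (N : ℕ) :
    ‖phaseSum A α N‖ ≤ ((intCube (Fin n) N).card : ℝ) ^ (m - 1) *
      √(recipSum (2 * N + 1) (α p) (c * (2 * N)) ^ n) := by
  have slice : ∀ x, ‖∑ z ∈ intCube (Fin n) N, ∑ y ∈ intCube (Fin n) N,
      eR (phaseForm A α (Function.update (Function.update x p.1.2 z) p.1.1 y)
        (Function.update (Function.update x p.1.2 z) p.1.1 y))‖ ≤
      (intCube (Fin n) N).card * √(recipSum (2 * N + 1) (α p) (c * (2 * N)) ^ n) := by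
    intro x
    obtain ⟨f, g, hfg⟩ := exists_phaseForm_update_update_eq A α hp x
    simp only [hfg]
    refine (Real.le_sqrt_of_sq_le (norm_sq_sum_sum_intCube_eR_le hA hc N (α p) f g)).trans_eq ?_
    rw [Real.sqrt_mul (sq_nonneg _), Real.sqrt_sq (Nat.cast_nonneg _), Fintype.card_fin]
  simpa only [phaseSum, Fintype.card_fin] using norm_sum_piFinset_le_of_update_update
    (intCube_nonempty N) p.1.1 p.1.2 (F := fun x => eR (phaseForm A α x x)) slice

lemma exists_norm_phaseSum_le_recipSum (hA : A.det ≠ 0) (hA' : (A + Aᵀ).det ≠ 0) :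
    ∃ c : ℕ, ∀ (m : ℕ) (α : Idx m → ℝ) (p : Idx m) (N : ℕ),
      ‖phaseSum A α N‖ ≤ ((intCube (Fin n) N).card : ℝ) ^ (m - 1) *
        √(recipSum (2 * N + 1) (α p) (c * (2 * N)) ^ n) := by
  have exists_column_bound : ∀ B : Matrix (Fin n) (Fin n) ℤ, ∃ c : ℕ, ∀ t, ∑ s, |B s t| ≤ c := by
    intro B
    obtain ⟨b, hb⟩ := (Set.finite_range fun t => ∑ s, |B s t|).bddAbove
    exact ⟨b.toNat, fun t => (hb ⟨t, rfl⟩).trans b.self_le_toNat⟩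
  obtain ⟨c, hc⟩ := exists_column_bound A
  obtain ⟨c', hc'⟩ := exists_column_bound (A + Aᵀ)
  refine ⟨max c c', fun m α p N => ?_⟩
  rcases p.2.eq_or_lt with hp | hp
  · exact norm_phaseSum_le_of_eq hA' (fun t => (hc' t).trans (by simp)) α hp N
  · exact norm_phaseSum_le_of_lt hA (fun t => (hc t).trans (by simp)) α hp N

lemma card_intCube_le {N : ℕ} {P : ℝ} (hP : 1 ≤ P) (hN : (N : ℝ) ≤ P) :
    ((intCube (Fin n) N).card : ℝ) ≤ (3 * P) ^ n := by
  rw [card_intCube, Fintype.card_fin]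
  gcongr
  linarith

lemma norm_phaseSum_le_rpow {ε : ℝ} (hε : 0 ≤ ε) {N : ℕ} {P : ℝ} (hP : 1 ≤ P)
    (hN : (N : ℝ) ≤ P) (A : Matrix (Fin n) (Fin n) ℤ) (α : Idx m → ℝ) :
    ‖phaseSum A α N‖ ≤ 3 ^ (m * n) * P ^ ((m : ℝ) * n + ε) :=
  calc ‖phaseSum A α N‖ ≤ ((intCube (Fin n) N).card : ℝ) ^ m := norm_phaseSum_le_card_pow A α N
    _ ≤ ((3 * P) ^ n) ^ m := by gcongr; exact card_intCube_le hP hN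
    _ = 3 ^ (m * n) * P ^ ((m : ℝ) * n) := by
        rw [← pow_mul, mul_pow, mul_comm n m, ← Real.rpow_natCast P (m * n), Nat.cast_mul]
    _ ≤ 3 ^ (m * n) * P ^ ((m : ℝ) * n + ε) := by gcongr; linarith

lemma exists_norm_phaseSum_le [NeZero m] (hA : A.det ≠ 0) (hA' : (A + Aᵀ).det ≠ 0) {ε : ℝ}
    (hε : 0 < ε) :
    ∃ K : ℝ, 0 < K ∧ ∀ P : ℝ, 1 ≤ P → ∀ N : ℕ, (N : ℝ) ≤ P → ∀ (α : Idx m → ℝ) (p : Idx m),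
      α p ≠ 0 → |α p| < P⁻¹ →
        ‖phaseSum A α N‖ ≤ K * P ^ ((m : ℝ) * n + ε) * (P ^ 2 * |α p|) ^ (-(n : ℝ) / 2) := by
  obtain ⟨c, hc⟩ := exists_norm_phaseSum_le_recipSum hA hA'
  obtain ⟨K, K_pos, hK⟩ := exists_sqrt_recipSum_pow_le c n hε
  refine ⟨(3 ^ n) ^ (m - 1) * K, by positivity, ?_⟩
  intro P hP N hN α p hαp hαP
  have P_pos : 0 < P := by linarith
  have powers : (P ^ n) ^ (m - 1) * P ^ ε = P ^ ((m : ℝ) * n + ε) * (P ^ 2) ^ (-(n : ℝ) / 2) := by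
    rw [← Real.rpow_natCast P 2, ← Real.rpow_mul P_pos.le, ← pow_mul, ← Real.rpow_natCast,
      ← Real.rpow_add P_pos, ← Real.rpow_add P_pos, Nat.cast_mul,
      Nat.cast_sub (NeZero.one_le : 1 ≤ m)]
    congr 1
    push_cast
    ring
  calc ‖phaseSum A α N‖
      ≤ ((3 * P) ^ n) ^ (m - 1) * (K * (P ^ ε * |α p| ^ (-(n : ℝ) / 2))) := by
        refine (hc m α p N).trans ?_
        gcongr
        · exact card_intCube_le hP hN
        · exact hK P hP N hN (α p) hαp hαP
    _ = (3 ^ n) ^ (m - 1) * K * ((P ^ n) ^ (m - 1) * P ^ ε) * |α p| ^ (-(n : ℝ) / 2) := by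
        rw [mul_pow, mul_pow]
        ring
    _ = (3 ^ n) ^ (m - 1) * K * P ^ ((m : ℝ) * n + ε) * (P ^ 2 * |α p|) ^ (-(n : ℝ) / 2) := by
        rw [powers, Real.mul_rpow (sq_nonneg P) (abs_nonneg _)]
        ring

end WeylBound

lemma sum_Icc_floor_eq_phaseSum {m n : ℕ} (A : Matrix (Fin n) (Fin n) ℤ) (α : Idx m → ℝ) {P : ℝ}
    (hP : 0 ≤ P) :
    ∑ x ∈ (Finset.Icc (fun _ _ => -⌊P⌋) (fun _ _ => ⌊P⌋) : Finset (Fin m → Fin n → ℤ)),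
        eR (∑ p : Idx m, α p * (quadZ A x p.1.1 p.1.2 : ℝ)) = phaseSum A α ⌊P⌋₊ := by
  simp only [phaseSum, phaseForm_self, intCube, Int.natCast_floor_eq_floor hP]
  rfl

lemma exists_abs_eq_maxAbs {m : ℕ} [NeZero m] (α : Idx m → ℝ) : ∃ p, |α p| = maxAbs α :=
  exists_eq_ciSup_of_finite

theorem stmt19_general (m n : ℕ) [NeZero m] (A : Matrix (Fin n) (Fin n) ℤ) (hA : A.det ≠ 0)
    (hA' : (A + Aᵀ).det ≠ 0) (ε : ℝ) (hε : 0 < ε) (θ : ℝ) (hθ : -(n : ℝ) / 2 ≤ θ) (hθ0 : θ ≤ 0) :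
    ∃ K : ℝ, 0 < K ∧
      ∀ P : ℝ, 1 ≤ P → ∀ α : Idx m → ℝ, 0 < maxAbs α → maxAbs α < P⁻¹ →
        ‖∑ x ∈ (Finset.Icc (fun _ _ => -⌊P⌋) (fun _ _ => ⌊P⌋) :
              Finset (Fin m → Fin n → ℤ)),
            eR (∑ p : Idx m, α p * (quadZ A x p.1.1 p.1.2 : ℝ))‖ ≤
          K * P ^ ((m : ℝ) * (n : ℝ) + ε) * (P ^ 2 * maxAbs α) ^ θ := by
  obtain ⟨K, K_pos, hK⟩ := exists_norm_phaseSum_le (m := m) hA hA' hε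
  refine ⟨max K (3 ^ (m * n)), by positivity, fun P hP α hα hαP => ?_⟩
  obtain ⟨p, hp⟩ := exists_abs_eq_maxAbs α
  have floor_le : (⌊P⌋₊ : ℝ) ≤ P := Nat.floor_le (by linarith)
  rw [sum_Icc_floor_eq_phaseSum A α (by linarith)]
  rcases le_total 1 (P ^ 2 * maxAbs α) with large | small
  · rw [← hp] at hα hαP large ⊢
    refine (hK P hP _ floor_le α p (abs_pos.mp hα) hαP).trans ?_
    gcongr
    exact le_max_left _ _
  · calc ‖phaseSum A α ⌊P⌋₊‖ ≤ 3 ^ (m * n) * P ^ ((m : ℝ) * n + ε) * 1 := by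
          rw [mul_one]
          exact norm_phaseSum_le_rpow hε.le hP floor_le A α
      _ ≤ max K (3 ^ (m * n)) * P ^ ((m : ℝ) * n + ε) * (P ^ 2 * maxAbs α) ^ θ := by
          gcongr
          · exact le_max_right _ _
          · exact Real.one_le_rpow_of_pos_of_le_one_of_nonpos (by positivity) small hθ0

lemma det_ne_zero_of_posDef_map {n : ℕ} {A : Matrix (Fin n) (Fin n) ℤ}
    (hA : (A.map ((↑) : ℤ → ℝ)).PosDef) : A.det ≠ 0 := by
  have det_map : ((A.det : ℤ) : ℝ) = (A.map ((↑) : ℤ → ℝ)).det := (Int.castRingHom ℝ).map_det A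
  exact_mod_cast det_map ▸ hA.det_pos.ne'

lemma det_add_transpose_ne_zero {n : ℕ} {A : Matrix (Fin n) (Fin n) ℤ} (hs : A.IsSymm)
    (hA : A.det ≠ 0) : (A + Aᵀ).det ≠ 0 := by
  rw [hs.eq, ← two_smul ℤ, det_smul]
  positivity

lemma neg_div_two_le_neg_div_triangular {m n : ℕ} [NeZero m] :
    -(n : ℝ) / 2 ≤ -(n : ℝ) / (2 * ((m : ℝ) * ((m : ℝ) + 1) / 2)) := by
  have one_le : (1 : ℝ) ≤ m := by exact_mod_cast NeZero.one_le (n := m)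
  rw [neg_div, neg_div, neg_le_neg_iff]
  gcongr
  nlinarith

/-- bound \eqref{depris} for the homogeneous exponential sum. -/
theorem stmt19 (m n : ℕ) [NeZero m] [NeZero n]
    (A : Matrix (Fin n) (Fin n) ℤ) (hAs : A.IsSymm)
    (hApd : (A.map ((↑) : ℤ → ℝ)).PosDef)
    (ε : ℝ) (hε : 0 < ε) :
    ∃ K : ℝ, 0 < K ∧
      ∀ P : ℝ, 1 ≤ P → ∀ α : Idx m → ℝ, 0 < maxAbs α → maxAbs α < P⁻¹ →
        ‖∑ x ∈ (Finset.Icc (fun _ _ => -⌊P⌋) (fun _ _ => ⌊P⌋) :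
              Finset (Fin m → Fin n → ℤ)),
            eR (∑ p : Idx m, α p * (quadZ A x p.1.1 p.1.2 : ℝ))‖ ≤
          K * P ^ ((m : ℝ) * (n : ℝ) + ε) *
            (P ^ 2 * maxAbs α) ^ (-(n : ℝ) / (2 * ((m : ℝ) * ((m : ℝ) + 1) / 2))) :=
  have hA := det_ne_zero_of_posDef_map hApd
  stmt19_general m n A hA (det_add_transpose_ne_zero hAs hA) ε hε _
    neg_div_two_le_neg_div_triangular
    (div_nonpos_of_nonpos_of_nonneg (neg_nonpos.mpr n.cast_nonneg) (by positivity))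
end
end
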